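/- arXiv:2505.07037 — 3 statements merged into one kernel-verified Lean document; each statement's English description precedes it below -/
import Mathlib

section
/- If ψ in the Schwartz space on ℝⁿ is even, i.e. ψ(−x) = ψ(x) for all x, then the ħ-Fourier transform of its Wigner function satisfies F_ħ(Wψ)(z) = 2^{−n} Wψ(−(1/2)Jz) for all z ∈ ℝ²ⁿ. -/
open MeasureTheory
open scoped RealInnerProductSpace

/-- The Wigner function `Wψ(x,p) = (2πħ)^{−n} ∫ e^{−(i/ħ)p·y} ψ(x+y/2) conj(ψ(x−y/2)) dy`. -/
noncomputable def wignerFn (n : ℕ) (hb : ℝ) (ψ : SchwartzMap (EuclideanSpace ℝ (Fin n)) ℂ)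
    (z : EuclideanSpace ℝ (Fin n) × EuclideanSpace ℝ (Fin n)) : ℂ :=
  ((2 * Real.pi * hb) ^ (-(n : ℝ)) : ℝ) *
    ∫ y : EuclideanSpace ℝ (Fin n),
      Complex.exp (-(Complex.I / hb) * (⟪z.2, y⟫ : ℝ)) *
        ψ (z.1 + (1 / 2 : ℝ) • y) * (starRingEnd ℂ) (ψ (z.1 - (1 / 2 : ℝ) • y))

/-- The `ħ`-Fourier transform on phase space `ℝ²ⁿ = ℝⁿ × ℝⁿ`:
`F_ħΦ(ζ) = (2πħ)^{−n} ∫ e^{−i ζ·z/ħ} Φ(z) dz`. -/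
noncomputable def hbarFourierPhase (n : ℕ) (hb : ℝ)
    (Φ : EuclideanSpace ℝ (Fin n) × EuclideanSpace ℝ (Fin n) → ℂ)
    (ζ : EuclideanSpace ℝ (Fin n) × EuclideanSpace ℝ (Fin n)) : ℂ :=
  ((2 * Real.pi * hb) ^ (-(n : ℝ)) : ℝ) *
    ∫ z : EuclideanSpace ℝ (Fin n) × EuclideanSpace ℝ (Fin n),
      Complex.exp (-Complex.I * ((⟪ζ.1, z.1⟫ : ℝ) + (⟪ζ.2, z.2⟫ : ℝ)) / hb) * Φ z

/-- The standard symplectic matrix `J(x,p) = (p, −x)` on `ℝ²ⁿ`. -/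
def symplecticJ (n : ℕ) (z : EuclideanSpace ℝ (Fin n) × EuclideanSpace ℝ (Fin n)) :
    EuclideanSpace ℝ (Fin n) × EuclideanSpace ℝ (Fin n) :=
  (z.2, -z.1)

open FourierTransform in
/-- The correlation kernel. -/
noncomputable def corrKer {n : ℕ} (ψ : SchwartzMap (EuclideanSpace ℝ (Fin n)) ℂ)
    (x y : EuclideanSpace ℝ (Fin n)) : ℂ :=
  ψ (x + (1 / 2 : ℝ) • y) * (starRingEnd ℂ) (ψ (x - (1 / 2 : ℝ) • y))

lemma der_bound {n : ℕ} (ψ : SchwartzMap (EuclideanSpace ℝ (Fin n)) ℂ)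
    (x y : EuclideanSpace ℝ (Fin n)) (c : ℝ) (hc : |c| ≤ 1) (i : ℕ) :
    ‖iteratedFDeriv ℝ i (fun y => ψ (x + c • y)) y‖ ≤ ‖iteratedFDeriv ℝ i ψ (x + c • y)‖ := by
  have h1 : ContDiff ℝ i (fun y => ψ (x + y)) :=
    (ψ.smooth i).comp (contDiff_const.add contDiff_id)
  have h2 := iteratedFDeriv_comp_const_smul c h1
  have h3 := congrFun h2 y
  rw [h3, norm_smul, iteratedFDeriv_comp_add_left, norm_pow, Real.norm_eq_abs]
  exact mul_le_of_le_one_left (norm_nonneg _) (pow_le_one₀ (abs_nonneg _) hc)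

lemma corrKer_eq {n : ℕ} (ψ : SchwartzMap (EuclideanSpace ℝ (Fin n)) ℂ)
    (x : EuclideanSpace ℝ (Fin n)) :
    corrKer ψ x = fun y => ψ (x + (1 / 2 : ℝ) • y) *
      (Complex.conjLIE ∘ (fun y => ψ (x + (-(1 / 2) : ℝ) • y))) y := by
  ext y
  simp [corrKer, sub_eq_add_neg]

lemma contDiff_aux {n : ℕ} (ψ : SchwartzMap (EuclideanSpace ℝ (Fin n)) ℂ)
    (x : EuclideanSpace ℝ (Fin n)) (c : ℝ) (N : ℕ∞) :
    ContDiff ℝ N (fun y => ψ (x + c • y)) :=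
  (ψ.smooth N).comp (contDiff_const.add (contDiff_id.const_smul c))

lemma corrKer_contDiff {n : ℕ} (ψ : SchwartzMap (EuclideanSpace ℝ (Fin n)) ℂ)
    (x : EuclideanSpace ℝ (Fin n)) (N : ℕ∞) : ContDiff ℝ N (corrKer ψ x) := by
  rw [corrKer_eq]
  exact (contDiff_aux ψ x _ N).mul (Complex.conjLIE.contDiff.comp (contDiff_aux ψ x _ N))

lemma weight_bound {V : Type*} [NormedAddCommGroup V] [NormedSpace ℝ V] (x y : V) :
    (1 + ‖x‖) * (1 + ‖y‖) ≤
      ((1 + ‖x + (1 / 2 : ℝ) • y‖) * (1 + ‖x + (-(1 / 2) : ℝ) • y‖)) ^ 2 := by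
  set u := x + (1 / 2 : ℝ) • y with hu
  set v := x + (-(1 / 2) : ℝ) • y with hv
  have hx : x = (1 / 2 : ℝ) • u + (1 / 2 : ℝ) • v := by rw [hu, hv]; module
  have hy : y = u - v := by rw [hu, hv]; module
  have h1 : ‖x‖ ≤ ‖u‖ + ‖v‖ := by
    rw [hx]
    refine (norm_add_le _ _).trans ?_
    rw [norm_smul, norm_smul]
    norm_num
    linarith [norm_nonneg u, norm_nonneg v]
  have h2 : ‖y‖ ≤ ‖u‖ + ‖v‖ := by rw [hy]; exact norm_sub_le _ _
  have hp := mul_nonneg (norm_nonneg u) (norm_nonneg v)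
  rw [pow_two]
  apply mul_le_mul <;> first | nlinarith | positivity

lemma corrKer_decay {n : ℕ} (ψ : SchwartzMap (EuclideanSpace ℝ (Fin n)) ℂ) (m j : ℕ) :
    ∃ C : ℝ, 0 ≤ C ∧ ∀ x y, ‖iteratedFDeriv ℝ j (corrKer ψ x) y‖ ≤
      C * ((1 + ‖x‖) ^ m)⁻¹ * ((1 + ‖y‖) ^ m)⁻¹ := by
  set S : ℝ := 2 ^ (2 * m) * (Finset.Iic (2 * m, j)).sup
    (fun m => SchwartzMap.seminorm ℝ m.1 m.2) ψ with hS
  have hS0 : 0 ≤ S := by positivity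
  have hb : ∀ i ≤ j, ∀ u, (1 + ‖u‖) ^ (2 * m) * ‖iteratedFDeriv ℝ i ψ u‖ ≤ S := fun i hi u =>
    SchwartzMap.one_add_le_sup_seminorm_apply (𝕜 := ℝ) (m := (2 * m, j)) le_rfl hi ψ u
  refine ⟨∑ i ∈ Finset.range (j + 1), (j.choose i : ℝ) * S * S,
    Finset.sum_nonneg fun i _ => by positivity, fun x y => ?_⟩
  rw [← div_eq_mul_inv, ← div_eq_mul_inv, div_div, le_div_iff₀ (by positivity), corrKer_eq]
  have h0 := norm_iteratedFDeriv_mul_le (contDiff_aux ψ x (1 / 2) j)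
    (Complex.conjLIE.contDiff.comp (contDiff_aux ψ x (-(1 / 2)) j)) y (n := j) (by norm_cast)
  refine (mul_le_mul_of_nonneg_right h0 (by positivity)).trans ?_
  rw [Finset.sum_mul]
  refine Finset.sum_le_sum fun i hi => ?_
  rw [LinearIsometryEquiv.norm_iteratedFDeriv_comp_left]
  have ha := der_bound ψ x y (1 / 2) (by rw [abs_le]; norm_num) i
  have hb' := der_bound ψ x y (-(1 / 2)) (by rw [abs_le]; norm_num) (j - i)
  have hA := hb i (by simpa [Nat.lt_succ_iff] using hi) (x + (1 / 2 : ℝ) • y)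
  have hB := hb (j - i) (Nat.sub_le _ _) (x + (-(1 / 2) : ℝ) • y)
  have hw : (1 + ‖x‖) ^ m * (1 + ‖y‖) ^ m ≤ (1 + ‖x + (1 / 2 : ℝ) • y‖) ^ (2 * m) *
      (1 + ‖x + (-(1 / 2) : ℝ) • y‖) ^ (2 * m) := by
    rw [← mul_pow, ← mul_pow, pow_mul]
    exact pow_le_pow_left₀ (by positivity) (weight_bound x y) m
  calc _ ≤ (j.choose i : ℝ) * ‖iteratedFDeriv ℝ i ψ (x + (1 / 2 : ℝ) • y)‖ *
        ‖iteratedFDeriv ℝ (j - i) ψ (x + (-(1 / 2) : ℝ) • y)‖ *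
        ((1 + ‖x + (1 / 2 : ℝ) • y‖) ^ (2 * m) *
          (1 + ‖x + (-(1 / 2) : ℝ) • y‖) ^ (2 * m)) := by gcongr
    _ = (j.choose i : ℝ) * ((1 + ‖x + (1 / 2 : ℝ) • y‖) ^ (2 * m) *
        ‖iteratedFDeriv ℝ i ψ (x + (1 / 2 : ℝ) • y)‖) *
        ((1 + ‖x + (-(1 / 2) : ℝ) • y‖) ^ (2 * m) *
          ‖iteratedFDeriv ℝ (j - i) ψ (x + (-(1 / 2) : ℝ) • y)‖) := by ring
    _ ≤ _ := by gcongr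

lemma weight_integrable (n : ℕ) :
    Integrable (fun x : EuclideanSpace ℝ (Fin n) => ((1 + ‖x‖) ^ (n + 1))⁻¹) := by
  have := integrable_one_add_norm (E := EuclideanSpace ℝ (Fin n)) (μ := volume)
    (r := ((n + 1 : ℕ) : ℝ)) (by simp)
  refine this.congr (Filter.Eventually.of_forall fun x => ?_)
  simp only
  rw [Real.rpow_neg (by positivity), Real.rpow_natCast]

lemma corrKer_der_integrable {n : ℕ} (ψ : SchwartzMap (EuclideanSpace ℝ (Fin n)) ℂ)
    (j : ℕ) (x : EuclideanSpace ℝ (Fin n)) :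
    Integrable (fun y => ‖iteratedFDeriv ℝ j (corrKer ψ x) y‖) := by
  obtain ⟨C, hC, h⟩ := corrKer_decay ψ (n + 1) j
  refine ((weight_integrable n).const_mul (C * ((1 + ‖x‖) ^ (n + 1))⁻¹)).mono' ?_ ?_
  · exact (((corrKer_contDiff ψ x j).continuous_iteratedFDeriv (m := j) le_rfl).norm).aestronglyMeasurable
  · exact Filter.Eventually.of_forall fun y => by simpa using h x y

lemma corrKer_integrable {n : ℕ} (ψ : SchwartzMap (EuclideanSpace ℝ (Fin n)) ℂ)
    (x : EuclideanSpace ℝ (Fin n)) : Integrable (corrKer ψ x) := by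
  have := corrKer_der_integrable ψ 0 x
  simp only [norm_iteratedFDeriv_zero] at this
  exact (integrable_norm_iff (corrKer_contDiff ψ x 0).continuous.aestronglyMeasurable).1 this

lemma corrKer_integral_bound {n : ℕ} (ψ : SchwartzMap (EuclideanSpace ℝ (Fin n)) ℂ)
    (j : ℕ) : ∃ C : ℝ, 0 ≤ C ∧ ∀ x, ∫ y, ‖iteratedFDeriv ℝ j (corrKer ψ x) y‖ ≤
      C * ((1 + ‖x‖) ^ (n + 1))⁻¹ := by
  obtain ⟨C, hC, h⟩ := corrKer_decay ψ (n + 1) j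
  refine ⟨C * ∫ y : EuclideanSpace ℝ (Fin n), ((1 + ‖y‖) ^ (n + 1))⁻¹,
    mul_nonneg hC (integral_nonneg fun y => by positivity), fun x => ?_⟩
  refine (integral_mono (corrKer_der_integrable ψ j x)
    ((weight_integrable n).const_mul (C * ((1 + ‖x‖) ^ (n + 1))⁻¹)) (h x)).trans ?_
  rw [integral_const_mul]
  apply le_of_eq; ring

open FourierTransform in
lemma fourier_corrKer_bound {n : ℕ} (ψ : SchwartzMap (EuclideanSpace ℝ (Fin n)) ℂ) :
    ∃ C : ℝ, 0 ≤ C ∧ ∀ x w, ‖𝓕 (corrKer ψ x) w‖ ≤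
      C * (((1 + ‖x‖) ^ (n + 1))⁻¹ * ((1 + ‖w‖) ^ (n + 1))⁻¹) := by
  choose C hC hCb using corrKer_integral_bound ψ
  have key : ∀ N : ℕ, ∀ x w, ‖w‖ ^ N * ‖𝓕 (corrKer ψ x) w‖ ≤
      (2 ^ N * ∑ p ∈ Finset.range (N + 1), C p) * ((1 + ‖x‖) ^ (n + 1))⁻¹ := by
    intro N x w
    have := Real.pow_mul_norm_iteratedFDeriv_fourier_le (K := 0) (N := N)
      (corrKer_contDiff ψ x N) (fun k j hk _ => by
        have : k = 0 := by simpa using hk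
        subst this
        simpa using corrKer_der_integrable ψ j x) (k := 0) (n := N) le_rfl le_rfl w
    simp only [norm_iteratedFDeriv_zero] at this
    refine this.trans ?_
    simp only [pow_zero, one_mul, Nat.cast_zero, mul_zero, zero_add, Finset.range_one,
      Finset.sum_product, Finset.sum_singleton]
    rw [mul_assoc, Finset.sum_mul]
    gcongr with p hp
    exact hCb p x
  refine ⟨2 ^ n * ((2 ^ 0 * ∑ p ∈ Finset.range (0 + 1), C p) +
    (2 ^ (n + 1) * ∑ p ∈ Finset.range (n + 1 + 1), C p)), ?_, fun x w => ?_⟩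
  · have : ∀ k, 0 ≤ ∑ p ∈ Finset.range k, C p := fun k => Finset.sum_nonneg fun i _ => hC i
    have h1 := this (0 + 1)
    have h2 := this (n + 1 + 1)
    positivity
  · rw [← mul_assoc, ← div_eq_mul_inv (b := (1 + ‖w‖) ^ (n + 1)), le_div_iff₀ (by positivity)]
    have h0 := key 0 x w
    have h1 := key (n + 1) x w
    have h2 := add_pow_le (zero_le_one (α := ℝ)) (norm_nonneg w) (n + 1)
    simp only [Nat.add_sub_cancel, one_pow] at h2
    calc _ ≤ ‖𝓕 (corrKer ψ x) w‖ * (2 ^ n * (1 + ‖w‖ ^ (n + 1))) := by gcongr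
      _ = 2 ^ n * (‖w‖ ^ 0 * ‖𝓕 (corrKer ψ x) w‖ +
          ‖w‖ ^ (n + 1) * ‖𝓕 (corrKer ψ x) w‖) := by ring
      _ ≤ 2 ^ n * (_ + _) := mul_le_mul_of_nonneg_left (add_le_add h0 h1) (by positivity)
      _ = _ := by ring

open FourierTransform in
lemma fourier_corrKer_integrable {n : ℕ} (ψ : SchwartzMap (EuclideanSpace ℝ (Fin n)) ℂ)
    (x : EuclideanSpace ℝ (Fin n)) : Integrable (𝓕 (corrKer ψ x)) := by
  obtain ⟨C, hC, h⟩ := fourier_corrKer_bound ψ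
  refine ((weight_integrable n).const_mul (C * ((1 + ‖x‖) ^ (n + 1))⁻¹)).mono' ?_ ?_
  · exact (VectorFourier.fourierIntegral_continuous Real.continuous_fourierChar
      continuous_inner (corrKer_integrable ψ x)).aestronglyMeasurable
  · exact Filter.Eventually.of_forall fun w => by simpa [mul_assoc] using h x w

/-- The unnormalised Wigner integral. -/
noncomputable def wigInt {n : ℕ} (hb : ℝ) (ψ : SchwartzMap (EuclideanSpace ℝ (Fin n)) ℂ)
    (x p : EuclideanSpace ℝ (Fin n)) : ℂ :=
  ∫ y : EuclideanSpace ℝ (Fin n),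
      Complex.exp (-(Complex.I / hb) * (⟪p, y⟫ : ℝ)) *
        ψ (x + (1 / 2 : ℝ) • y) * (starRingEnd ℂ) (ψ (x - (1 / 2 : ℝ) • y))

open FourierTransform in
lemma wigInt_eq {n : ℕ} {hb : ℝ} (hhb : 0 < hb)
    (ψ : SchwartzMap (EuclideanSpace ℝ (Fin n)) ℂ) (x p : EuclideanSpace ℝ (Fin n)) :
    wigInt hb ψ x p = 𝓕 (corrKer ψ x) ((2 * Real.pi * hb)⁻¹ • p) := by
  rw [Real.fourier_eq', wigInt]
  congr 1
  ext y
  have hc : (hb : ℂ) ≠ 0 := by exact_mod_cast hhb.ne'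
  have hpi : (Real.pi : ℂ) ≠ 0 := by exact_mod_cast Real.pi_ne_zero
  rw [smul_eq_mul, corrKer, mul_assoc, inner_smul_right, real_inner_comm]
  congr 2
  push_cast
  field_simp

lemma wigInt_stronglyMeasurable {n : ℕ} (hb : ℝ)
    (ψ : SchwartzMap (EuclideanSpace ℝ (Fin n)) ℂ) :
    StronglyMeasurable (fun z : EuclideanSpace ℝ (Fin n) × EuclideanSpace ℝ (Fin n) =>
      wigInt hb ψ z.1 z.2) := by
  unfold wigInt
  apply StronglyMeasurable.integral_prod_right
    (f := fun (z : EuclideanSpace ℝ (Fin n) × EuclideanSpace ℝ (Fin n)) y =>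
      Complex.exp (-(Complex.I / hb) * (⟪z.2, y⟫ : ℝ)) *
        ψ (z.1 + (1 / 2 : ℝ) • y) * (starRingEnd ℂ) (ψ (z.1 - (1 / 2 : ℝ) • y)))
  apply Continuous.stronglyMeasurable
  have hψ := ψ.continuous
  have hconj := Complex.continuous_conj
  unfold Function.uncurry
  fun_prop

lemma wigInt_integrable {n : ℕ} {hb : ℝ} (hhb : 0 < hb)
    (ψ : SchwartzMap (EuclideanSpace ℝ (Fin n)) ℂ) :
    Integrable (fun z : EuclideanSpace ℝ (Fin n) × EuclideanSpace ℝ (Fin n) =>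
      wigInt hb ψ z.1 z.2) := by
  obtain ⟨C, hC, h⟩ := fourier_corrKer_bound ψ
  have hne : (2 * Real.pi * hb)⁻¹ ≠ 0 := by positivity
  have h2 := ((weight_integrable n).mul_prod
    ((weight_integrable n).comp_smul hne)).const_mul C
  refine h2.mono' (wigInt_stronglyMeasurable hb ψ).aestronglyMeasurable ?_
  refine Filter.Eventually.of_forall fun z => ?_
  rw [wigInt_eq hhb]
  exact h z.1 _

open FourierTransform in
lemma wigInt_inversion {n : ℕ} {hb : ℝ} (hhb : 0 < hb)
    (ψ : SchwartzMap (EuclideanSpace ℝ (Fin n)) ℂ) (x b : EuclideanSpace ℝ (Fin n)) :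
    ∫ p, Complex.exp (-Complex.I * (⟪b, p⟫ : ℝ) / hb) * wigInt hb ψ x p =
      ((2 * Real.pi * hb) ^ n : ℝ) * corrKer ψ x (-b) := by
  have h1 := congrFun (Continuous.fourierInv_fourier_eq (corrKer_contDiff ψ x 0).continuous
    (corrKer_integrable ψ x) (fourier_corrKer_integrable ψ x)) (-b)
  rw [Real.fourierInv_eq'] at h1
  have hc : (hb : ℂ) ≠ 0 := by exact_mod_cast hhb.ne'
  have hpi : (Real.pi : ℂ) ≠ 0 := by exact_mod_cast Real.pi_ne_zero
  have h2 := Measure.integral_comp_smul (volume : Measure (EuclideanSpace ℝ (Fin n)))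
    (fun v => Complex.exp ((↑(2 * Real.pi * ⟪v, -b⟫) * Complex.I)) • 𝓕 (corrKer ψ x) v)
    (2 * Real.pi * hb)⁻¹
  rw [h1] at h2
  simp only [finrank_euclideanSpace, Fintype.card_fin, inv_pow, inv_inv] at h2
  rw [abs_of_pos (by positivity), Complex.real_smul] at h2
  rw [← h2]
  congr 1
  ext p
  rw [wigInt_eq hhb, smul_eq_mul, inner_smul_left, inner_neg_right, real_inner_comm]
  congr 2
  simp
  field_simp

/-- For an even Schwartz function `ψ`, the `ħ`-Fourier transform of its Wigner function
satisfies `F_ħ(Wψ)(z) = 2^{−n} Wψ(−(1/2)Jz)`. -/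
theorem fourier_wigner_of_even (n : ℕ) (hb : ℝ) (hhb : 0 < hb)
    (ψ : SchwartzMap (EuclideanSpace ℝ (Fin n)) ℂ) (hψeven : ∀ x, ψ (-x) = ψ x)
    (z : EuclideanSpace ℝ (Fin n) × EuclideanSpace ℝ (Fin n)) :
    hbarFourierPhase n hb (wignerFn n hb ψ) z =
      (2 : ℂ) ^ (-(n : ℤ)) * wignerFn n hb ψ ((-(1 / 2 : ℝ)) • symplecticJ n z) := by
  have hneg : ∀ x, ψ (-x) = ψ x := hψeven
  have hW : ∀ w, wignerFn n hb ψ w =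
      ((2 * Real.pi * hb) ^ (-(n : ℝ)) : ℝ) * wigInt hb ψ w.1 w.2 := fun w => rfl
  have hpos : 0 < 2 * Real.pi * hb := by positivity
  set c : ℝ := (2 * Real.pi * hb) ^ (-(n : ℝ)) with hcdef
  have hc1 : (c : ℂ) * ((2 * Real.pi * hb) ^ n : ℝ) = 1 := by
    rw [← Complex.ofReal_mul, hcdef, Real.rpow_neg hpos.le, Real.rpow_natCast,
      inv_mul_cancel₀ (by positivity), Complex.ofReal_one]
  have hL : hbarFourierPhase n hb (wignerFn n hb ψ) z =
      c * ∫ x, Complex.exp (-Complex.I * (⟪z.1, x⟫ : ℝ) / hb) * corrKer ψ x (-z.2) := by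
    rw [hbarFourierPhase, ← hcdef]
    congr 1
    have hI : Integrable (fun w : EuclideanSpace ℝ (Fin n) × EuclideanSpace ℝ (Fin n) =>
        Complex.exp (-Complex.I * ((⟪z.1, w.1⟫ : ℝ) + (⟪z.2, w.2⟫ : ℝ)) / hb) *
          wignerFn n hb ψ w) := by
      have h1 : Integrable (wignerFn n hb ψ) := (wigInt_integrable hhb ψ).const_mul (c : ℂ)
      refine h1.bdd_mul (c := 1) ?_ ?_
      · apply Continuous.aestronglyMeasurable
        fun_prop
      · refine Filter.Eventually.of_forall fun w => ?_
        rw [Complex.norm_exp]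
        simp [← Complex.ofReal_add]
    rw [Measure.volume_eq_prod] at hI ⊢
    rw [integral_prod _ hI]
    congr 1
    ext x
    have h3 := wigInt_inversion hhb ψ x z.2
    calc _ = ∫ p, (Complex.exp (-Complex.I * (⟪z.1, x⟫ : ℝ) / hb) * c) *
          (Complex.exp (-Complex.I * (⟪z.2, p⟫ : ℝ) / hb) * wigInt hb ψ x p) := by
          congr 1
          ext p
          rw [hW, mul_add, add_div, Complex.exp_add]
          ring
      _ = _ := by
          rw [integral_const_mul, h3]
          linear_combination (Complex.exp (-Complex.I * (⟪z.1, x⟫ : ℝ) / hb) *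
            corrKer ψ x (-z.2)) * hc1
  rw [hL, hW]
  have h4 := Measure.integral_comp_smul (volume : Measure (EuclideanSpace ℝ (Fin n)))
    (fun x => Complex.exp (-Complex.I * (⟪z.1, x⟫ : ℝ) / hb) * corrKer ψ x (-z.2)) (1 / 2 : ℝ)
  have h5 : wigInt hb ψ ((-(1 / 2 : ℝ)) • symplecticJ n z).1
      ((-(1 / 2 : ℝ)) • symplecticJ n z).2 =
      ∫ x, (fun x => Complex.exp (-Complex.I * (⟪z.1, x⟫ : ℝ) / hb) *
        corrKer ψ x (-z.2)) ((1 / 2 : ℝ) • x) := by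
    rw [wigInt]
    congr 1
    ext y
    simp only [symplecticJ, Prod.smul_fst, Prod.smul_snd, corrKer]
    rw [mul_assoc, ← hneg (-(1 / 2 : ℝ) • z.2 - (1 / 2 : ℝ) • y)]
    have e1 : -(-(1 / 2 : ℝ) • z.2 - (1 / 2 : ℝ) • y) =
      (1 / 2 : ℝ) • y - (1 / 2 : ℝ) • -z.2 := by module
    have e2 : -(1 / 2 : ℝ) • z.2 + (1 / 2 : ℝ) • y =
      (1 / 2 : ℝ) • y + (1 / 2 : ℝ) • -z.2 := by module
    have e3 : -(1 / 2 : ℝ) • -z.1 = (1 / 2 : ℝ) • z.1 := by module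
    rw [e1, e2, e3, inner_smul_left, inner_smul_right]
    congr 2
    simp
    ring
  rw [h5, h4]
  simp only [finrank_euclideanSpace, Fintype.card_fin]
  rw [abs_of_pos (by positivity), Complex.real_smul]
  have h6 : (2 : ℂ) ^ (-(n : ℤ)) * (((((1 / 2 : ℝ) ^ n)⁻¹ : ℝ)) : ℂ) = 1 := by
    push_cast
    rw [zpow_neg, zpow_natCast, one_div, inv_pow, inv_inv]
    exact inv_mul_cancel₀ (pow_ne_zero _ two_ne_zero)
  linear_combination (-(c * ∫ x, Complex.exp (-Complex.I * (⟪z.1, x⟫ : ℝ) / hb) *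
    corrKer ψ x (-z.2))) * h6
end

section
/- Let ψ in the Schwartz space on ℝⁿ be even (ψ(−x) = ψ(x)) with Wψ ≠ 0, and let X ⊂ ℝ²ⁿ be measurable. If the Wigner function Wψ is ε-concentrated in X in the sense that ∫_X |Wψ(z)|² dz ≥ (1−ε²)‖Wψ‖²_{L²(ℝ²ⁿ)} with 0 ≤ ε ≤ 1/2, then Vol(X) ≥ (πħ)ⁿ (1−2ε). -/
open MeasureTheory
open scoped RealInnerProductSpace

section DonohoStark
open FourierTransform SchwartzMap
open scoped ContDiff ENNReal

variable {V : Type*} [NormedAddCommGroup V] [InnerProductSpace ℝ V] [FiniteDimensional ℝ V]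
  [MeasurableSpace V] [BorelSpace V]

theorem wcv_fourier_toLp_ae (f : V → ℂ) (h1 : Integrable f) (h2 : MemLp f 2) :
    (𝓕 (h2.toLp f) : Lp ℂ 2 (volume : Measure V)) =ᵐ[volume] 𝓕 f := by
  have hcont : Continuous (𝓕 f) := VectorFourier.fourierIntegral_continuous
    Real.continuous_fourierChar (by exact continuous_inner) h1
  refine ae_eq_of_integral_contDiff_smul_eq ?_ ?_ ?_
  · exact (Lp.memLp _).locallyIntegrable (by norm_num)
  · exact hcont.locallyIntegrable
  intro g g_smooth g_cpt
  have hg₁ : HasCompactSupport (Complex.ofRealCLM ∘ g) := g_cpt.comp_left rfl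
  have hg₂ : ContDiff ℝ ∞ (Complex.ofRealCLM ∘ g) := by fun_prop
  set G : 𝓢(V, ℂ) := hg₁.toSchwartzMap hg₂ with hG
  have hGg : ∀ x, G x = (g x : ℂ) := fun x => rfl
  have e1 : ∫ x, g x • (𝓕 (h2.toLp f) : Lp ℂ 2 (volume : Measure V)) x =
      (Lp.toTemperedDistribution (μ := (volume : Measure V))
        (𝓕 (h2.toLp f) : Lp ℂ 2 (volume : Measure V))) G := by
    rw [Lp.toTemperedDistribution_apply]
    simp [hGg]
  rw [e1, ← Lp.fourier_toTemperedDistribution_eq, TemperedDistribution.fourier_apply,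
    Lp.toTemperedDistribution_apply]
  have e2 : ∫ x, (𝓕 G) x • (h2.toLp f) x = ∫ x, (𝓕 G) x • f x := by
    apply integral_congr_ae
    filter_upwards [h2.coeFn_toLp] with x hx
    rw [hx]
  rw [e2]
  have := VectorFourier.integral_fourierIntegral_smul_eq_flip (μ := (volume : Measure V)) (ν := (volume : Measure V)) (e := Real.fourierChar) (L := innerₗ V) (f := G) (g := f) Real.continuous_fourierChar
    (by exact continuous_inner) G.integrable h1
  rw [flip_innerₗ] at this
  have e3 : ∫ x, g x • 𝓕 f x = ∫ x, G x • 𝓕 f x := by simp [hGg]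
  rw [e3]
  exact this

theorem wcv_eLpNorm_fourier (f : V → ℂ) (h1 : Integrable f) (h2 : MemLp f 2) :
    eLpNorm (𝓕 f) 2 volume = eLpNorm f 2 volume := by
  rw [← eLpNorm_congr_ae (wcv_fourier_toLp_ae f h1 h2), ← eLpNorm_congr_ae h2.coeFn_toLp,
    ← Lp.enorm_def, ← Lp.enorm_def]
  rw [← ofReal_norm, ← ofReal_norm, Lp.norm_fourier_eq]

theorem wcv_sq_eLpNorm (f : V → ℂ) (h2 : MemLp f 2) :
    eLpNorm f 2 volume = ENNReal.ofReal (√(∫ x, ‖f x‖ ^ 2)) := by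
  rw [h2.eLpNorm_eq_integral_rpow_norm (by norm_num) (by norm_num), Real.sqrt_eq_rpow]
  norm_num

theorem wcv_compl (f : V → ℂ) (h2 : MemLp f 2) (S : Set V) (hS : MeasurableSet S)
    (ε : ℝ) (hε0 : 0 ≤ ε)
    (hc : (1 - ε ^ 2) * ∫ x, ‖f x‖ ^ 2 ≤ ∫ x in S, ‖f x‖ ^ 2) :
    eLpNorm (Sᶜ.indicator f) 2 volume ≤ ENNReal.ofReal ε * eLpNorm f 2 volume := by
  rw [wcv_sq_eLpNorm _ (h2.indicator hS.compl), wcv_sq_eLpNorm _ h2,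
    ← ENNReal.ofReal_mul hε0]
  apply ENNReal.ofReal_le_ofReal
  have hi : Integrable (fun x => ‖f x‖ ^ 2) := h2.integrable_norm_pow (by norm_num)
  have := integral_add_compl hS hi
  have e : ∫ x, ‖Sᶜ.indicator f x‖ ^ 2 = ∫ x in Sᶜ, ‖f x‖ ^ 2 := by
    rw [← integral_indicator hS.compl]
    congr 1 with x
    by_cases hx : x ∈ Sᶜ <;> simp [hx]
  rw [e]
  apply Real.sqrt_le_iff.2
  refine ⟨by positivity, ?_⟩
  rw [mul_pow, Real.sq_sqrt (by positivity)]
  linarith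

theorem wcv_donoho_stark (w : V → ℂ) (h1 : Integrable w) (h2 : MemLp w 2)
    (R : V ≃ₗᵢ[ℝ] V) (hR : ∀ v, 𝓕 w v = w (R v)) (h0 : w ≠ 0)
    (S : Set V) (hS : MeasurableSet S) (ε : ℝ) (hε0 : 0 ≤ ε)
    (hc : (1 - ε ^ 2) * ∫ x, ‖w x‖ ^ 2 ≤ ∫ x in S, ‖w x‖ ^ 2) :
    ENNReal.ofReal (1 - 2 * ε) ≤ volume S := by
  have hmp : MeasurePreserving R := R.measurePreserving
  set N := eLpNorm w 2 volume with hN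
  have hN0 : N ≠ 0 := by
    intro h
    rw [hN, eLpNorm_eq_zero_iff h1.1 (by norm_num)] at h
    apply h0
    ext v
    obtain ⟨u, rfl⟩ := R.surjective v
    rw [← hR, Real.fourier_congr_ae h u]
    simp [Real.fourier_eq]
  have hNt : N ≠ ⊤ := h2.2.ne
  set f := S.indicator w with hf
  set h := Sᶜ.indicator w with hh
  have hf1 : Integrable f := h1.indicator hS
  have hf2 : MemLp f 2 := h2.indicator hS
  have hh1 : Integrable h := h1.indicator hS.compl
  have hh2 : MemLp h 2 := h2.indicator hS.compl
  set S' := R ⁻¹' S with hS'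
  have hS'm : MeasurableSet S' := hmp.measurable hS
  have hvol : volume S' = volume S := hmp.measure_preimage hS.nullMeasurableSet
  have hb1 : eLpNorm h 2 volume ≤ ENNReal.ofReal ε * N := wcv_compl w h2 S hS ε hε0 hc
  have hFw : 𝓕 w = w ∘ R := funext hR
  have hb2 : eLpNorm (S'ᶜ.indicator (𝓕 w)) 2 volume ≤ ENNReal.ofReal ε * N := by
    have : S'ᶜ.indicator (𝓕 w) = h ∘ R := by
      rw [hFw, hh]; rfl
    rw [this, eLpNorm_comp_measurePreserving hh2.1 hmp]
    exact hb1
  have hsum : 𝓕 w = S'ᶜ.indicator (𝓕 w) + (S'.indicator (𝓕 h) + S'.indicator (𝓕 f)) := by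
    have hw : w = h + f := by
      rw [hh, hf]; ext v; by_cases hv : v ∈ S <;> simp [hv]
    have hadd : 𝓕 w = 𝓕 h + 𝓕 f := by
      conv_lhs => rw [hw]
      exact VectorFourier.fourierIntegral_add Real.continuous_fourierChar
        (by exact continuous_inner) hh1 hf1
    rw [← Set.indicator_add', ← hadd, Set.indicator_compl_add_self]
  have hcf : ∀ g : V → ℂ, Integrable g → Continuous (𝓕 g) := fun g hg =>
    VectorFourier.fourierIntegral_continuous Real.continuous_fourierChar
      (by exact continuous_inner) hg
  have hb3 : eLpNorm (S'.indicator (𝓕 h)) 2 volume ≤ ENNReal.ofReal ε * N := by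
    refine (eLpNorm_indicator_le _).trans ?_
    rw [wcv_eLpNorm_fourier h hh1 hh2]; exact hb1
  have hf1n : eLpNorm f 1 volume ≤ N * volume S ^ (1/2 : ℝ) := by
    rw [hf, eLpNorm_indicator_eq_eLpNorm_restrict hS]
    refine (eLpNorm_le_eLpNorm_mul_rpow_measure_univ (p := 1) (q := 2) (by norm_num) h1.1.restrict).trans ?_
    rw [Measure.restrict_apply_univ]
    norm_num
    gcongr
    exact eLpNorm_restrict_le _ _ _ _
  have hb4 : eLpNorm (S'.indicator (𝓕 f)) 2 volume ≤ N * volume S := by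
    have hbd : ∀ v, ‖𝓕 f v‖ₑ ≤ eLpNorm f 1 volume := by
      intro v
      rw [eLpNorm_one_eq_lintegral_enorm, Real.fourier_eq]
      refine (enorm_integral_le_lintegral_enorm _).trans_eq ?_
      congr 1 with x
      rw [← ofReal_norm, ← ofReal_norm, Circle.norm_smul]
    rw [eLpNorm_indicator_eq_eLpNorm_restrict hS'm]
    refine (eLpNorm_le_of_ae_enorm_bound (Filter.Eventually.of_forall hbd)).trans ?_
    rw [Measure.restrict_apply_univ, hvol]
    norm_num
    calc _ ≤ volume S ^ (1/2:ℝ) * (N * volume S ^ (1/2 : ℝ)) := by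
          rw [mul_comm]; gcongr
      _ = N * (volume S ^ (1/2:ℝ) * volume S ^ (1/2 : ℝ)) := by ring
      _ = _ := by
        rw [← ENNReal.rpow_add_of_nonneg _ _ (by norm_num) (by norm_num)]; norm_num
  have hNF : N = eLpNorm (𝓕 w) 2 volume := (wcv_eLpNorm_fourier w h1 h2).symm
  have key : N ≤ ENNReal.ofReal ε * N + (ENNReal.ofReal ε * N + N * volume S) := by
    conv_lhs => rw [hNF, hsum]
    have m1 := ((hcf w h1).aestronglyMeasurable (μ := (volume : Measure V))).indicator hS'm.compl
    have m2 := ((hcf h hh1).aestronglyMeasurable (μ := (volume : Measure V))).indicator hS'm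
    have m3 := ((hcf f hf1).aestronglyMeasurable (μ := (volume : Measure V))).indicator hS'm
    refine (eLpNorm_add_le m1 (m2.add m3) (by norm_num)).trans ?_
    gcongr
    refine (eLpNorm_add_le m2 m3 (by norm_num)).trans ?_
    gcongr
  have key2 : N * 1 ≤ N * (ENNReal.ofReal (2 * ε) + volume S) := by
    refine (mul_one N).trans_le (key.trans_eq ?_)
    rw [two_mul, ENNReal.ofReal_add hε0 hε0]; ring
  have key3 := (ENNReal.mul_le_mul_iff_right hN0 hNt).1 key2
  rw [ENNReal.ofReal_sub _ (by positivity), ENNReal.ofReal_one]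
  exact tsub_le_iff_left.2 key3

end DonohoStark

section CrossWigner
open FourierTransform SchwartzMap LineDeriv
open scoped ContDiff ENNReal

variable {E : Type*} [NormedAddCommGroup E] [InnerProductSpace ℝ E] [FiniteDimensional ℝ E]
  [MeasurableSpace E] [BorelSpace E]

noncomputable def wcvK (φ χ : 𝓢(E, ℂ)) (x : E) : 𝓢(E, ℂ) :=
  pairing (ContinuousLinearMap.mul ℂ ℂ) (φ.compSubConstCLM ℂ (-x))
    ((compCLMOfContinuousLinearEquiv ℂ (ContinuousLinearEquiv.neg ℝ) χ).compSubConstCLM ℂ x)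

theorem wcvK_apply (φ χ : 𝓢(E, ℂ)) (x y : E) : wcvK φ χ x y = φ (x + y) * χ (x - y) := by
  simp [wcvK, add_comm]

theorem wcvK_deriv (φ χ : 𝓢(E, ℂ)) (x m : E) :
    ∂_{m} (wcvK φ χ x) + wcvK φ (∂_{m} χ) x = wcvK (∂_{m} φ) χ x := by
  ext y
  rw [add_apply, lineDerivOp_apply_eq_fderiv, wcvK_apply, wcvK_apply,
    lineDerivOp_apply_eq_fderiv, lineDerivOp_apply_eq_fderiv]
  have h1 : HasFDerivAt (fun y => φ (x + y)) (fderiv ℝ φ (x + y)) y := by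
    have := (φ.differentiableAt (x := x + y)).hasFDerivAt
    have h := this.comp y ((hasFDerivAt_id y).const_add x)
    rw [ContinuousLinearMap.comp_id] at h
    exact h
  have h2 : HasFDerivAt (fun y => χ (x - y)) (-(fderiv ℝ χ (x - y))) y := by
    have := (χ.differentiableAt (x := x - y)).hasFDerivAt
    have h := this.comp y ((hasFDerivAt_id y).const_sub x)
    rw [ContinuousLinearMap.comp_neg, ContinuousLinearMap.comp_id] at h
    exact h
  have h3 : (wcvK φ χ x : E → ℂ) = (fun y => φ (x + y)) * fun y => χ (x - y) :=
    funext (wcvK_apply φ χ x)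
  rw [h3, (h1.mul h2).fderiv]
  simp
  ring

noncomputable def wcvM (m : E) (φ : 𝓢(E, ℂ)) : 𝓢(E, ℂ) := smulLeftCLM ℂ (inner ℝ · m) φ

theorem wcvM_apply (m : E) (φ : 𝓢(E, ℂ)) (x : E) :
    wcvM m φ x = ((inner ℝ x m : ℝ) : ℂ) * φ x := by
  have : (inner ℝ · m : E → ℝ).HasTemperateGrowth := ((innerSL ℝ).flip m).hasTemperateGrowth
  simp [wcvM, smulLeftCLM_apply_apply this]

theorem wcvK_mul (φ χ : 𝓢(E, ℂ)) (x m : E) :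
    wcvK (wcvM m φ) χ x + wcvK φ (wcvM m χ) x
      = (2 * ((inner ℝ x m : ℝ) : ℂ)) • wcvK φ χ x := by
  ext y
  simp only [add_apply, smul_apply, wcvK_apply, wcvM_apply,
    inner_add_left, inner_sub_left, smul_eq_mul]
  push_cast
  ring

noncomputable def wcvF (φ χ : 𝓢(E, ℂ)) (x p : E) : ℂ := 𝓕 (wcvK φ χ x) p

theorem wcvF_x (φ χ : 𝓢(E, ℂ)) (x p m : E) :
    wcvF (wcvM m φ) χ x p + wcvF φ (wcvM m χ) x p
      = (2 * ((inner ℝ x m : ℝ) : ℂ)) * wcvF φ χ x p := by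
  have := congrArg (fun f => (𝓕 f : 𝓢(E, ℂ)) p) (wcvK_mul φ χ x m)
  simpa [wcvF, FourierTransform.fourier_add, FourierTransform.fourier_smul] using this

theorem wcvF_p (φ χ : 𝓢(E, ℂ)) (x p m : E) :
    wcvF (∂_{m} φ) χ x p - wcvF φ (∂_{m} χ) x p
      = (2 * Real.pi * Complex.I * ((inner ℝ p m : ℝ) : ℂ)) * wcvF φ χ x p := by
  have := congrArg (fun f => (𝓕 f : 𝓢(E, ℂ)) p) (wcvK_deriv φ χ x m)
  have hg : (inner ℝ · m : E → ℝ).HasTemperateGrowth := ((innerSL ℝ).flip m).hasTemperateGrowth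
  simp only [fourier_lineDerivOp_eq, FourierTransform.fourier_add, add_apply,
    smul_apply, smulLeftCLM_apply_apply hg] at this
  simp only [wcvF, ← this, smul_eq_mul, Complex.real_smul]
  ring

theorem wcvF_bdd (φ χ : 𝓢(E, ℂ)) : ∃ C, ∀ x p, ‖wcvF φ χ x p‖ ≤ C := by
  obtain ⟨C, hC⟩ : ∃ C, ∀ x, ‖φ x‖ ≤ C := by
    obtain ⟨C, hC⟩ := φ.decay 0 0
    exact ⟨C, fun x => by simpa using hC.2 x⟩
  refine ⟨C * ∫ y, ‖χ y‖, fun x p => ?_⟩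
  have e : wcvF φ χ x p = 𝓕 (wcvK φ χ x : E → ℂ) p := by
    rw [wcvF, SchwartzMap.fourier_coe]
  rw [e, Real.fourier_eq]
  calc _ ≤ ∫ y, ‖wcvK φ χ x y‖ := by
        refine (norm_integral_le_integral_norm _).trans_eq ?_
        simp [Circle.norm_smul]
    _ ≤ ∫ y, C * ‖χ (x - y)‖ := by
        apply integral_mono (wcvK φ χ x).integrable.norm
        · exact ((χ.integrable (μ := volume)).norm.comp_sub_left x).const_mul C
        · intro y
          simp only [wcvK_apply, norm_mul]
          gcongr
          exact hC _
    _ = _ := by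
        rw [integral_const_mul]
        congr 1
        exact integral_sub_left_eq_self (fun y => ‖χ y‖) volume x

def wcvAdm (q : E → E → ℝ) : Prop :=
  (∀ x p, 0 ≤ q x p) ∧ ∀ φ χ : 𝓢(E, ℂ), ∃ C, ∀ x p, q x p * ‖wcvF φ χ x p‖ ≤ C

theorem wcvAdm_x (q : E → E → ℝ) (h : wcvAdm q) (m : E) :
    wcvAdm (fun x p => q x p * |inner ℝ x m|) := by
  refine ⟨fun x p => mul_nonneg (h.1 x p) (abs_nonneg _), fun φ χ => ?_⟩
  obtain ⟨C1, h1⟩ := h.2 (wcvM m φ) χ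
  obtain ⟨C2, h2⟩ := h.2 φ (wcvM m χ)
  refine ⟨C1 + C2, fun x p => ?_⟩
  have e := congrArg norm (wcvF_x φ χ x p m)
  rw [norm_mul, norm_mul, Complex.norm_real, Complex.norm_ofNat, Real.norm_eq_abs] at e
  have t := norm_add_le (wcvF (wcvM m φ) χ x p) (wcvF φ (wcvM m χ) x p)
  have hq := h.1 x p
  have t2 := mul_le_mul_of_nonneg_left t hq
  rw [e] at t2
  have := h1 x p
  have := h2 x p
  have : 0 ≤ q x p * |inner ℝ x m| * ‖wcvF φ χ x p‖ := by positivity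
  nlinarith

theorem wcvAdm_p (q : E → E → ℝ) (h : wcvAdm q) (m : E) :
    wcvAdm (fun x p => q x p * |inner ℝ p m|) := by
  refine ⟨fun x p => mul_nonneg (h.1 x p) (abs_nonneg _), fun φ χ => ?_⟩
  obtain ⟨C1, h1⟩ := h.2 (∂_{m} φ) χ
  obtain ⟨C2, h2⟩ := h.2 φ (∂_{m} χ)
  refine ⟨C1 + C2, fun x p => ?_⟩
  have e := congrArg norm (wcvF_p φ χ x p m)
  rw [norm_mul, norm_mul, norm_mul, norm_mul, Complex.norm_real, Complex.norm_ofNat,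
    Complex.norm_real, Complex.norm_I, Real.norm_eq_abs, Real.norm_eq_abs,
    abs_of_pos Real.pi_pos] at e
  have t := norm_sub_le (wcvF (∂_{m} φ) χ x p) (wcvF φ (∂_{m} χ) x p)
  have hq := h.1 x p
  have t2 := mul_le_mul_of_nonneg_left t hq
  rw [e] at t2
  have := h1 x p
  have := h2 x p
  have : 0 ≤ q x p * |inner ℝ p m| * ‖wcvF φ χ x p‖ := by positivity
  have := Real.pi_gt_three
  nlinarith

theorem wcvAdm_add (q r : E → E → ℝ) (h : wcvAdm q) (h' : wcvAdm r) :
    wcvAdm (fun x p => q x p + r x p) := by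
  refine ⟨fun x p => add_nonneg (h.1 x p) (h'.1 x p), fun φ χ => ?_⟩
  obtain ⟨C1, h1⟩ := h.2 φ χ
  obtain ⟨C2, h2⟩ := h'.2 φ χ
  refine ⟨C1 + C2, fun x p => ?_⟩
  rw [add_mul]
  exact add_le_add (h1 x p) (h2 x p)

theorem wcvAdm_sum {ι : Type*} (s : Finset ι) (q : ι → E → E → ℝ) (h : ∀ i, wcvAdm (q i)) :
    wcvAdm (fun x p => ∑ i ∈ s, q i x p) := by
  classical
  induction s using Finset.induction_on with
  | empty => exact ⟨fun x p => by simp, fun φ χ => ⟨0, fun x p => by simp⟩⟩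
  | insert a s ha ih =>
    simp only [Finset.sum_insert ha]
    exact wcvAdm_add _ _ (h a) ih

theorem wcvAdm_mono (q r : E → E → ℝ) (h : wcvAdm q) (hr : ∀ x p, 0 ≤ r x p)
    (hrq : ∀ x p, r x p ≤ q x p) : wcvAdm r := by
  refine ⟨hr, fun φ χ => ?_⟩
  obtain ⟨C1, h1⟩ := h.2 φ χ
  exact ⟨C1, fun x p => (mul_le_mul_of_nonneg_right (hrq x p) (norm_nonneg _)).trans (h1 x p)⟩

theorem wcv_norm_le (x : E) : ‖x‖ ≤ ∑ i, |inner ℝ x (stdOrthonormalBasis ℝ E i)| := by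
  conv_lhs => rw [← (stdOrthonormalBasis ℝ E).sum_repr' x]
  refine (norm_sum_le _ _).trans_eq ?_
  refine Finset.sum_congr rfl fun i _ => ?_
  rw [norm_smul, OrthonormalBasis.norm_eq_one, mul_one, Real.norm_eq_abs, real_inner_comm]

theorem wcvAdm_nx (q : E → E → ℝ) (h : wcvAdm q) :
    wcvAdm (fun x p => q x p * (1 + ‖x‖)) := by
  refine wcvAdm_mono _ _ (wcvAdm_add _ _ h
    (wcvAdm_sum Finset.univ _ fun i => wcvAdm_x q h (stdOrthonormalBasis ℝ E i)))
    (fun x p => mul_nonneg (h.1 x p) (by positivity)) fun x p => ?_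
  rw [← Finset.mul_sum, mul_add, mul_one]
  gcongr
  · exact h.1 x p
  · exact wcv_norm_le x

theorem wcvAdm_np (q : E → E → ℝ) (h : wcvAdm q) :
    wcvAdm (fun x p => q x p * (1 + ‖p‖)) := by
  refine wcvAdm_mono _ _ (wcvAdm_add _ _ h
    (wcvAdm_sum Finset.univ _ fun i => wcvAdm_p q h (stdOrthonormalBasis ℝ E i)))
    (fun x p => mul_nonneg (h.1 x p) (by positivity)) fun x p => ?_
  rw [← Finset.mul_sum, mul_add, mul_one]
  gcongr
  · exact h.1 x p
  · exact wcv_norm_le p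

theorem wcvAdm_pow (k : ℕ) :
    wcvAdm (fun x p : E => (1 + ‖x‖) ^ k * (1 + ‖p‖) ^ k) := by
  induction k with
  | zero => exact ⟨fun x p => by simp, fun φ χ => by simpa using wcvF_bdd φ χ⟩
  | succ k ih =>
    have := wcvAdm_np _ (wcvAdm_nx _ ih)
    refine wcvAdm_mono _ _ this (fun x p => by positivity) fun x p => le_of_eq ?_
    ring

theorem wcvF_meas (φ χ : 𝓢(E, ℂ)) :
    StronglyMeasurable (fun z : E × E => wcvF φ χ z.1 z.2) := by
  have e : (fun z : E × E => wcvF φ χ z.1 z.2) = fun z : E × E =>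
      ∫ y, Real.fourierChar (-(inner ℝ y z.2)) • (φ (z.1 + y) * χ (z.1 - y)) := by
    ext z
    rw [wcvF, SchwartzMap.fourier_coe, Real.fourier_eq]
    simp [wcvK_apply]
  rw [e]
  have hc : Continuous (fun q : (E × E) × E =>
      Real.fourierChar (-(inner ℝ q.2 q.1.2)) • (φ (q.1.1 + q.2) * χ (q.1.1 - q.2))) := by
    have h1 := φ.continuous
    have h2 := χ.continuous
    have h3 := Real.continuous_fourierChar
    fun_prop
  exact hc.stronglyMeasurable.integral_prod_right

theorem wcvF_integrable (φ χ : 𝓢(E, ℂ)) :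
    Integrable (fun z : E × E => wcvF φ χ z.1 z.2) := by
  set k := Module.finrank ℝ E + 1 with hk
  obtain ⟨C, hC⟩ := (wcvAdm_pow (E := E) k).2 φ χ
  have hi : Integrable (fun x : E => (1 + ‖x‖) ^ (-(k : ℝ))) :=
    integrable_one_add_norm (by rw [hk]; push_cast; linarith)
  have hp := (hi.mul_prod hi).const_mul C
  refine hp.mono' (wcvF_meas φ χ).aestronglyMeasurable (Filter.Eventually.of_forall fun z => ?_)
  have := hC z.1 z.2
  rw [Real.rpow_neg (by positivity), Real.rpow_neg (by positivity), Real.rpow_natCast,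
    Real.rpow_natCast, ← mul_inv, ← div_eq_mul_inv, le_div_iff₀ (by positivity)]
  linarith

theorem wcvF_fourier_p (φ χ : 𝓢(E, ℂ)) (x ξ : E) :
    ∫ p, Real.fourierChar (-(inner ℝ p ξ)) • wcvF φ χ x p = φ (x - ξ) * χ (x + ξ) := by
  have h : ∫ p, Real.fourierChar (-(inner ℝ p ξ)) • wcvF φ χ x p
      = 𝓕 ((𝓕 (wcvK φ χ x) : 𝓢(E, ℂ)) : E → ℂ) ξ := by
    rw [Real.fourier_eq]; rfl
  have h2 := Real.fourierInv_eq_fourier_neg ((𝓕 (wcvK φ χ x) : 𝓢(E, ℂ)) : E → ℂ) (-ξ)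
  rw [neg_neg] at h2
  rw [h, ← h2, ← SchwartzMap.fourierInv_coe, FourierTransform.fourierInv_fourier_eq, wcvK_apply]
  congr 2 <;> abel_nf

noncomputable def wcvRot : WithLp 2 (E × E) ≃ₗᵢ[ℝ] WithLp 2 (E × E) where
  toFun u := WithLp.toLp 2 (-u.ofLp.2, u.ofLp.1)
  invFun u := WithLp.toLp 2 (u.ofLp.2, -u.ofLp.1)
  left_inv u := by apply (WithLp.ofLp_injective 2); ext <;> simp
  right_inv u := by apply (WithLp.ofLp_injective 2); ext <;> simp
  map_add' u v := by
    apply (WithLp.ofLp_injective 2); ext <;> simp [add_comm]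
  map_smul' c u := by apply (WithLp.ofLp_injective 2); ext <;> simp
  norm_map' u := by
    have h := WithLp.prod_norm_sq_eq_of_L2 u
    have h' := WithLp.prod_norm_sq_eq_of_L2 (WithLp.toLp 2 (-u.ofLp.2, u.ofLp.1))
    refine (sq_eq_sq₀ (norm_nonneg _) (norm_nonneg _)).1 ?_
    refine h'.trans ?_
    rw [h]
    simp [add_comm]

theorem wcvF_fourier (φ χ : 𝓢(E, ℂ)) (hχ : ∀ x, χ (-x) = χ x) (ξ : WithLp 2 (E × E)) :
    𝓕 (fun u : WithLp 2 (E × E) => wcvF φ χ u.ofLp.1 u.ofLp.2) ξ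
      = wcvF φ χ (wcvRot ξ).ofLp.1 (wcvRot ξ).ofLp.2 := by
  rw [Real.fourier_eq]
  have hmp := WithLp.volume_preserving_ofLp E E
  set G : E × E → ℂ := fun z => Real.fourierChar (-(inner ℝ z.1 ξ.ofLp.1)) •
      (Real.fourierChar (-(inner ℝ z.2 ξ.ofLp.2)) • wcvF φ χ z.1 z.2) with hG
  have e1 : ∀ u : WithLp 2 (E × E), Real.fourierChar (-(inner ℝ u ξ)) •
      wcvF φ χ u.ofLp.1 u.ofLp.2 = G u.ofLp := by
    intro u
    rw [hG, WithLp.prod_inner_apply, neg_add, AddChar.map_add_eq_mul, mul_smul]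
  simp_rw [e1]
  have hGi : Integrable G := by
    refine (wcvF_integrable φ χ).mono ?_ (Filter.Eventually.of_forall fun z => ?_)
    · have hm := (wcvF_meas φ χ).aestronglyMeasurable (μ := (volume : Measure (E × E)))
      have h3 := Real.continuous_fourierChar
      have c1 : Continuous (fun z : E × E => Real.fourierChar (-(inner ℝ z.1 ξ.ofLp.1))) := by
        fun_prop
      have c2 : Continuous (fun z : E × E => Real.fourierChar (-(inner ℝ z.2 ξ.ofLp.2))) := by
        fun_prop
      exact c1.aestronglyMeasurable.smul (c2.aestronglyMeasurable.smul hm)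
    · simp [hG, Circle.norm_smul]
  have e2 : ∫ u : WithLp 2 (E × E), G u.ofLp = ∫ z, G z :=
    hmp.integral_comp (MeasurableEquiv.toLp 2 (E × E)).symm.measurableEmbedding G
  rw [e2, Measure.volume_eq_prod, integral_prod _ hGi]
  simp only [hG]
  have e3 : ∀ x, ∫ p, Real.fourierChar (-(inner ℝ p ξ.ofLp.2)) • wcvF φ χ x p
      = wcvK φ χ (-ξ.ofLp.2) x := by
    intro x
    rw [wcvF_fourier_p, wcvK_apply]
    congr 1
    · congr 1; abel
    · rw [← hχ]; congr 1; abel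
  have e4 : ∀ x, ∫ p, Real.fourierChar (-(inner ℝ x ξ.ofLp.1)) •
     (Real.fourierChar (-(inner ℝ p ξ.ofLp.2)) • wcvF φ χ x p)
      = Real.fourierChar (-(inner ℝ x ξ.ofLp.1)) • wcvK φ χ (-ξ.ofLp.2) x := by
    intro x
    rw [← e3]
    simp_rw [Circle.smul_def]
    exact integral_smul _ _
  simp_rw [e4]
  rw [← Real.fourier_eq, ← SchwartzMap.fourier_coe]
  rfl

end CrossWigner

section Scaling
open SchwartzMap

/-- The rescaled function `x ↦ ψ (s x)`. -/
noncomputable def wcvPhi {n : ℕ} (s : ℝ) (hs : s ≠ 0)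
    (ψ : 𝓢(EuclideanSpace ℝ (Fin n), ℂ)) : 𝓢(EuclideanSpace ℝ (Fin n), ℂ) :=
  compCLMOfContinuousLinearEquiv ℂ (ContinuousLinearEquiv.smulLeft (Units.mk0 s hs)) ψ

theorem wcvPhi_apply {n : ℕ} (s : ℝ) (hs : s ≠ 0)
    (ψ : 𝓢(EuclideanSpace ℝ (Fin n), ℂ)) (x : EuclideanSpace ℝ (Fin n)) :
    wcvPhi s hs ψ x = ψ (s • x) := rfl

noncomputable def wcvConj {n : ℕ} (ψ : 𝓢(EuclideanSpace ℝ (Fin n), ℂ)) :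
    𝓢(EuclideanSpace ℝ (Fin n), ℂ) :=
  postcompCLM (Complex.conjCLE : ℂ →L[ℝ] ℂ) ψ

theorem wcvConj_apply {n : ℕ} (ψ : 𝓢(EuclideanSpace ℝ (Fin n), ℂ))
    (x : EuclideanSpace ℝ (Fin n)) : wcvConj ψ x = (starRingEnd ℂ) (ψ x) := rfl

theorem wcv_wigner_eq (n : ℕ) (hb : ℝ) (hhb : 0 < hb)
    (ψ : 𝓢(EuclideanSpace ℝ (Fin n), ℂ)) (s : ℝ) (hs : 0 < s) (hs2 : s * s = Real.pi * hb)
    (x p : EuclideanSpace ℝ (Fin n)) :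
    wignerFn n hb ψ (s • x, s • p) =
      (((2 * Real.pi * hb) ^ (-(n : ℝ)) : ℝ) * ((2 * s) ^ n : ℝ) : ℂ) *
        wcvF (wcvPhi s hs.ne' ψ) (wcvConj (wcvPhi s hs.ne' ψ)) x p := by
  rw [wignerFn]
  conv_rhs => rw [mul_assoc]
  congr 1
  set f : EuclideanSpace ℝ (Fin n) → ℂ := fun y =>
    Complex.exp (-(Complex.I / hb) * (⟪s • p, y⟫ : ℝ)) *
        ψ (s • x + (1 / 2 : ℝ) • y) * (starRingEnd ℂ) (ψ (s • x - (1 / 2 : ℝ) • y)) with hf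
  have h := Measure.integral_comp_smul (volume : Measure (EuclideanSpace ℝ (Fin n))) f (2 * s)
  rw [finrank_euclideanSpace_fin] at h
  have hpos : (0 : ℝ) < (2 * s) ^ n := by positivity
  rw [abs_of_pos (inv_pos.2 hpos)] at h
  have h2 : ∫ y, f y = ((2 * s) ^ n : ℝ) • ∫ y, f ((2 * s) • y) := by
    rw [h, smul_smul, mul_inv_cancel₀ hpos.ne', one_smul]
  change ∫ y, f y = _
  rw [h2, Complex.real_smul]
  congr 1
  rw [wcvF, SchwartzMap.fourier_coe, Real.fourier_eq']
  congr 1 with y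
  rw [hf, wcvK_apply, wcvConj_apply, wcvPhi_apply, wcvPhi_apply, smul_eq_mul]
  have a1 : (1 / 2 : ℝ) • (2 * s) • y = s • y := by
    rw [smul_smul]; congr 1; ring
  have key : -(Complex.I / hb) * ((⟪s • p, (2 * s) • y⟫ : ℝ) : ℂ) =
      ((-2 * Real.pi * ⟪y, p⟫ : ℝ) : ℂ) * Complex.I := by
    rw [real_inner_smul_left, real_inner_smul_right, real_inner_comm]
    have : (s : ℂ) * s = Real.pi * hb := by exact_mod_cast hs2
    have hb0 : (hb : ℂ) ≠ 0 := by exact_mod_cast hhb.ne'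
    push_cast
    field_simp
    first | linear_combination (-1 * (⟪y, p⟫ : ℂ)) * this | linear_combination ((⟪y, p⟫ : ℂ)) * this
  simp only [a1, smul_add, smul_sub, key]
  ring

end Scaling

/-- If the Wigner function of an even Schwartz function is `ε`-concentrated in a measurable
set `X ⊂ ℝ²ⁿ` with `0 ≤ ε ≤ 1/2`, then `Vol(X) ≥ (πħ)ⁿ(1 − 2ε)`. -/
theorem wigner_concentration_volume (n : ℕ) (hb : ℝ) (hhb : 0 < hb)
    (ψ : SchwartzMap (EuclideanSpace ℝ (Fin n)) ℂ) (hψeven : ∀ x, ψ (-x) = ψ x)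
    (hW0 : wignerFn n hb ψ ≠ 0)
    (X : Set (EuclideanSpace ℝ (Fin n) × EuclideanSpace ℝ (Fin n))) (hX : MeasurableSet X)
    (ε : ℝ) (hε0 : 0 ≤ ε) (hε : ε ≤ 1 / 2)
    (hconc : (1 - ε ^ 2) *
        ∫ z : EuclideanSpace ℝ (Fin n) × EuclideanSpace ℝ (Fin n), ‖wignerFn n hb ψ z‖ ^ 2 ≤
        ∫ z in X, ‖wignerFn n hb ψ z‖ ^ 2) :
    ENNReal.ofReal ((Real.pi * hb) ^ n * (1 - 2 * ε)) ≤ volume X := by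
  set s : ℝ := √(Real.pi * hb) with hsdef
  have hpb : 0 < Real.pi * hb := by positivity
  have hs : 0 < s := Real.sqrt_pos.2 hpb
  have hs2 : s * s = Real.pi * hb := Real.mul_self_sqrt hpb.le
  set φ := wcvPhi s hs.ne' ψ with hφ
  set χ := wcvConj φ with hχ
  set c : ℂ := (((2 * Real.pi * hb) ^ (-(n : ℝ)) : ℝ) * ((2 * s) ^ n : ℝ) : ℂ) with hc
  have hW : ∀ x p : EuclideanSpace ℝ (Fin n), wignerFn n hb ψ (s • x, s • p) = c * wcvF φ χ x p :=
    wcv_wigner_eq n hb hhb ψ s hs hs2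
  have hW' : ∀ z : EuclideanSpace ℝ (Fin n) × EuclideanSpace ℝ (Fin n), wignerFn n hb ψ (s • z) = c * wcvF φ χ z.1 z.2 := fun z => hW z.1 z.2
  have hχe : ∀ x, χ (-x) = χ x := by
    intro x
    rw [hχ, wcvConj_apply, wcvConj_apply, hφ, wcvPhi_apply, wcvPhi_apply, smul_neg, hψeven]
  set w : WithLp 2 (EuclideanSpace ℝ (Fin n) × EuclideanSpace ℝ (Fin n)) → ℂ := fun u => c * wcvF φ χ u.ofLp.1 u.ofLp.2 with hw
  have hmp := WithLp.volume_preserving_ofLp (EuclideanSpace ℝ (Fin n)) (EuclideanSpace ℝ (Fin n))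
  have hemb : MeasurableEmbedding (WithLp.ofLp : WithLp 2 (EuclideanSpace ℝ (Fin n) × EuclideanSpace ℝ (Fin n)) → EuclideanSpace ℝ (Fin n) × EuclideanSpace ℝ (Fin n)) :=
    (MeasurableEquiv.toLp 2 (EuclideanSpace ℝ (Fin n) × EuclideanSpace ℝ (Fin n))).symm.measurableEmbedding
  have h1 : Integrable w :=
    (hmp.integrable_comp_of_integrable (wcvF_integrable φ χ)).const_mul c
  have h2 : MemLp w 2 := by
    obtain ⟨C, hC⟩ := wcvF_bdd φ χ
    refine (memLp_two_iff_integrable_sq_norm h1.1).2 ?_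
    refine (h1.norm.const_mul (‖c‖ * C)).mono' (h1.1.norm.pow 2)
      (Filter.Eventually.of_forall fun u => ?_)
    rw [Real.norm_of_nonneg (by positivity), pow_two]
    refine mul_le_mul_of_nonneg_right ?_ (norm_nonneg _)
    rw [hw, norm_mul]
    exact mul_le_mul_of_nonneg_left (hC _ _) (norm_nonneg _)
  have hR : ∀ v, FourierTransform.fourier w v = w (wcvRot v) := by
    intro v
    have := wcvF_fourier φ χ hχe v
    have e : FourierTransform.fourier w v = c * FourierTransform.fourier
        (fun u : WithLp 2 (EuclideanSpace ℝ (Fin n) × EuclideanSpace ℝ (Fin n)) => wcvF φ χ u.ofLp.1 u.ofLp.2) v := by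
      rw [Real.fourier_eq', Real.fourier_eq', ← integral_const_mul]
      congr 1 with u
      simp only [hw, smul_eq_mul]
      ring
    rw [e, this]
  have h0 : w ≠ 0 := by
    intro h
    apply hW0
    ext z
    have := congrFun h (WithLp.toLp 2 (s⁻¹ • z))
    have h' := hW' (s⁻¹ • z)
    rw [smul_smul, mul_inv_cancel₀ hs.ne', one_smul] at h'
    rw [h']
    exact this
  set Y : Set (EuclideanSpace ℝ (Fin n) × EuclideanSpace ℝ (Fin n)) := (fun z => s • z) ⁻¹' X with hY
  have hYm : MeasurableSet Y := (measurable_const_smul s) hX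
  set S : Set (WithLp 2 (EuclideanSpace ℝ (Fin n) × EuclideanSpace ℝ (Fin n))) := WithLp.ofLp ⁻¹' Y with hS
  have hSm : MeasurableSet S := hmp.measurable hYm
  haveI hhaar : (volume : Measure (EuclideanSpace ℝ (Fin n) × EuclideanSpace ℝ (Fin n))).IsAddHaarMeasure :=
    Measure.prod.instIsAddHaarMeasure (volume : Measure (EuclideanSpace ℝ (Fin n)))
      (volume : Measure (EuclideanSpace ℝ (Fin n)))
  have hdim : Module.finrank ℝ (EuclideanSpace ℝ (Fin n) × EuclideanSpace ℝ (Fin n)) = n + n := by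
    rw [Module.finrank_prod, finrank_euclideanSpace_fin]
  have hsn : s ^ (n + n) = (Real.pi * hb) ^ n := by
    rw [pow_add, ← mul_pow, hs2]
  have hsnpos : 0 < s ^ (n + n) := by positivity
  have hvolS : volume S = volume Y := hmp.measure_preimage hYm.nullMeasurableSet
  have hvolY : volume Y = ENNReal.ofReal ((s ^ (n + n))⁻¹) * volume X := by
    rw [hY, Measure.addHaar_preimage_smul _ hs.ne', hdim, abs_of_pos (inv_pos.2 hsnpos)]
  have hint : ∫ u, ‖w u‖ ^ 2 = (s ^ (n + n))⁻¹ * ∫ z : EuclideanSpace ℝ (Fin n) × EuclideanSpace ℝ (Fin n), ‖wignerFn n hb ψ z‖ ^ 2 := by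
    have e := Measure.integral_comp_smul (volume : Measure (EuclideanSpace ℝ (Fin n) × EuclideanSpace ℝ (Fin n)))
      (fun z => ‖wignerFn n hb ψ z‖ ^ 2) s
    rw [hdim, abs_of_pos (inv_pos.2 hsnpos), smul_eq_mul] at e
    rw [← e, ← hmp.integral_comp hemb]
    congr 1 with u
    rw [hW']
  have hintS : ∫ u in S, ‖w u‖ ^ 2 = (s ^ (n + n))⁻¹ * ∫ z in X, ‖wignerFn n hb ψ z‖ ^ 2 := by
    have e := Measure.integral_comp_smul (volume : Measure (EuclideanSpace ℝ (Fin n) × EuclideanSpace ℝ (Fin n)))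
      (X.indicator fun z => ‖wignerFn n hb ψ z‖ ^ 2) s
    rw [hdim, abs_of_pos (inv_pos.2 hsnpos), smul_eq_mul, integral_indicator hX] at e
    rw [← e, ← hmp.integral_comp hemb, ← integral_indicator hSm]
    congr 1 with u
    by_cases hu : s • u.ofLp ∈ X
    · have hu' : u ∈ S := hu
      rw [Set.indicator_of_mem hu, Set.indicator_of_mem hu', hW']
    · have hu' : u ∉ S := hu
      rw [Set.indicator_of_notMem hu, Set.indicator_of_notMem hu']
  have main := wcv_donoho_stark w h1 h2 wcvRot hR h0 S hSm ε hε0 (by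
    rw [hint, hintS, mul_left_comm]
    exact mul_le_mul_of_nonneg_left hconc (inv_pos.2 hsnpos).le)
  rw [hvolS, hvolY] at main
  rw [← hsn, ENNReal.ofReal_mul hsnpos.le]
  calc _ ≤ ENNReal.ofReal (s ^ (n + n)) * (ENNReal.ofReal ((s ^ (n + n))⁻¹) * volume X) := by
        gcongr
    _ = volume X := by
        rw [← mul_assoc, ← ENNReal.ofReal_mul hsnpos.le, mul_inv_cancel₀ hsnpos.ne',
          ENNReal.ofReal_one, one_mul]
end

section
/- Let ψ in the Schwartz space on ℝⁿ be even (ψ(−x) = ψ(x)) with Wψ ≠ 0, and suppose the Wigner function Wψ is ε-concentrated in the ball B^{2n}(√ħ) of radius √ħ centered at the origin of ℝ²ⁿ, i.e. ∫_{B^{2n}(√ħ)} |Wψ(z)|² dz ≥ (1−ε²)‖Wψ‖²_{L²(ℝ²ⁿ)} with 0 ≤ ε ≤ 1. Then 1/2 − 1/(2·n!) ≤ ε, i.e. ε ≥ 1/2 − 1/(2·n!). -/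
open MeasureTheory
open scoped RealInnerProductSpace

/-- The closed Euclidean ball `B²ⁿ(√ħ) = {z ∈ ℝ²ⁿ : |z|² ≤ ħ}` in phase space. -/
def phaseBall (n : ℕ) (hb : ℝ) : Set (EuclideanSpace ℝ (Fin n) × EuclideanSpace ℝ (Fin n)) :=
  {z | ‖z.1‖ ^ 2 + ‖z.2‖ ^ 2 ≤ hb}

open scoped FourierTransform ENNReal ContDiff

section abstractPart
variable {V : Type*} [NormedAddCommGroup V] [InnerProductSpace ℝ V] [FiniteDimensional ℝ V]
  [MeasurableSpace V] [BorelSpace V]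

lemma aux_fourier_continuous {h : V → ℂ} (h1 : Integrable h) : Continuous (𝓕 h) :=
  VectorFourier.fourierIntegral_continuous Real.continuous_fourierChar continuous_inner h1

lemma aux_swap {f g : V → ℂ} (hf : Integrable f) (hg : Integrable g) :
    ∫ ξ, 𝓕 f ξ * g ξ = ∫ x, f x * 𝓕 g x := by
  simpa using! VectorFourier.integral_bilin_fourierIntegral_eq_flip (.mul ℂ ℂ) (L := innerₗ V)
    Real.continuous_fourierChar continuous_inner hf hg

lemma aux_plancherel {h : V → ℂ} (h1 : Integrable h) (h2 : MemLp h 2) :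
    eLpNorm (𝓕 h) 2 volume = eLpNorm h 2 volume := by
  set hL : Lp (α := V) ℂ 2 volume := h2.toLp h with hhL
  set G : Lp (α := V) ℂ 2 volume := 𝓕 hL with hG
  have key : ∀ᵐ x, (G : V → ℂ) x = 𝓕 h x := by
    apply ae_eq_of_integral_contDiff_smul_eq
    · exact (Lp.memLp G).locallyIntegrable (by norm_num)
    · exact (aux_fourier_continuous h1).locallyIntegrable
    · intro g hg1 hg2
      have hc : HasCompactSupport (fun x => (g x : ℂ)) :=
        hg2.comp_left (g := fun r : ℝ => (r : ℂ)) (by simp)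
      set φ : SchwartzMap V ℂ := hc.toSchwartzMap (Complex.ofRealCLM.contDiff.comp hg1) with hφ
      have hφx : ∀ x, φ x = (g x : ℂ) := fun x => rfl
      have e1 : ∀ F : V → ℂ, ∫ x, g x • F x = ∫ x, φ x * F x := by
        intro F
        congr 1
      have h3 := congrArg (fun D : TemperedDistribution V ℂ => D φ)
        (Lp.fourier_toTemperedDistribution_eq hL)
      simp only [TemperedDistribution.fourier_apply, Lp.toTemperedDistribution_apply,
        smul_eq_mul] at h3
      rw [e1, e1, hG, ← h3, ← aux_swap φ.integrable h1]
      apply integral_congr_ae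
      filter_upwards [h2.coeFn_toLp] with x hx
      rw [hhL, hx, SchwartzMap.fourier_coe]
  have e2 : eLpNorm (𝓕 h) 2 volume = eLpNorm G 2 volume :=
    (eLpNorm_congr_ae key).symm
  have e3 : ‖G‖ₑ = ‖hL‖ₑ := by
    rw [← ofReal_norm, ← ofReal_norm, hG, Lp.norm_fourier_eq]
  rw [e2, ← Lp.enorm_def, e3, Lp.enorm_def]
  exact eLpNorm_congr_ae h2.coeFn_toLp

lemma aux_scale (n : ℕ) (hn : Module.finrank ℝ V = 2 * n) (κ : ℝ) (hκ : 0 < κ) (J : V ≃ₗᵢ[ℝ] V)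
    {g : V → ℂ} (hg : Continuous g) :
    eLpNorm (fun z => (κ : ℂ) ^ n * g (κ • J z)) 2 volume = eLpNorm g 2 volume := by
  have e0 : (fun z => (κ : ℂ) ^ n * g (κ • J z)) = ((κ : ℂ) ^ n) • (fun z => g (κ • J z)) := by
    ext z; simp
  rw [e0, eLpNorm_const_smul]
  have e1 : eLpNorm (fun z => g (κ • J z)) 2 volume = eLpNorm (fun z => g (κ • z)) 2 volume :=
    eLpNorm_comp_measurePreserving (g := fun z => g (κ • z)) (f := J)
      (by fun_prop) J.measurePreserving
  have e2 : eLpNorm (fun z => g (κ • z)) 2 volume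
      = eLpNorm g 2 (Measure.map (fun z : V => κ • z) volume) := by
    rw [eLpNorm_map_measure (by fun_prop) (by fun_prop)]
    rfl
  rw [e1, e2, Measure.map_addHaar_smul _ hκ.ne', eLpNorm_smul_measure_of_ne_top (by norm_num), hn]
  have e3 : ENNReal.ofReal |(κ ^ (2 * n))⁻¹| ^ (1 / (2:ℝ≥0∞)).toReal
      = ENNReal.ofReal ((κ ^ n)⁻¹) := by
    rw [abs_of_pos (by positivity), ENNReal.ofReal_rpow_of_pos (by positivity)]
    congr 1
    have : (κ ^ (2 * n))⁻¹ = ((κ ^ n)⁻¹) ^ 2 := by rw [inv_pow]; ring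
    rw [this]
    have : (1 / (2:ℝ≥0∞)).toReal = 1 / 2 := by simp
    rw [this, ← Real.sqrt_eq_rpow, Real.sqrt_sq (by positivity)]
  rw [e3]
  have e4 : ‖(κ : ℂ) ^ n‖ₑ = ENNReal.ofReal (κ ^ n) := by
    rw [← ofReal_norm]; simp [abs_of_pos hκ]
  rw [e4, smul_eq_mul, ← mul_assoc, ← ENNReal.ofReal_mul (by positivity),
    mul_inv_cancel₀ (by positivity)]
  simp

lemma aux_donoho (n : ℕ) (hn : Module.finrank ℝ V = 2 * n) (κ : ℝ) (hκ : 0 < κ) (J : V ≃ₗᵢ[ℝ] V)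
    {f : V → ℂ} (h1 : Integrable f) (h2 : MemLp f 2)
    (hf : ∀ z, f z = (κ : ℂ) ^ n * 𝓕 f (κ • J z)) {B : Set V} (hB : MeasurableSet B) :
    eLpNorm f 2 (volume.restrict B) ≤
      ENNReal.ofReal (κ ^ n) * volume B * eLpNorm f 2 (volume.restrict B)
        + eLpNorm f 2 (volume.restrict Bᶜ) := by
  set P := B.indicator f with hP
  set Q := Bᶜ.indicator f with hQ
  have iP : Integrable P := h1.indicator hB
  have iQ : Integrable Q := h1.indicator hB.compl
  have hPQ : f = P + Q := by simp [hP, hQ]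
  have hF : 𝓕 f = 𝓕 P + 𝓕 Q := by
    rw [hPQ]
    ext w
    simp only [Real.fourier_eq, Pi.add_apply, smul_add]
    rw [integral_add]
    · simpa using (VectorFourier.fourierIntegral_convergent_iff (L := innerₗ V) Real.continuous_fourierChar
        continuous_inner w).2 iP
    · simpa using (VectorFourier.fourierIntegral_convergent_iff (L := innerₗ V) Real.continuous_fourierChar
        continuous_inner w).2 iQ
  set FP := fun z => (κ : ℂ) ^ n * 𝓕 P (κ • J z) with hFP
  set FQ := fun z => (κ : ℂ) ^ n * 𝓕 Q (κ • J z) with hFQ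
  have cP := aux_fourier_continuous iP
  have cQ := aux_fourier_continuous iQ
  have hf' : f = FP + FQ := by
    ext z
    rw [hf z, hF]
    simp [hFP, hFQ, mul_add]
  have b1 : eLpNorm FQ 2 (volume.restrict B) ≤ eLpNorm f 2 (volume.restrict Bᶜ) := by
    calc _ ≤ eLpNorm FQ 2 volume := eLpNorm_mono_measure _ Measure.restrict_le_self
      _ = eLpNorm (𝓕 Q) 2 volume := aux_scale n hn κ hκ J cQ
      _ = eLpNorm Q 2 volume := aux_plancherel iQ (h2.indicator hB.compl)
      _ = _ := eLpNorm_indicator_eq_eLpNorm_restrict hB.compl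
  have b2 : ∀ z, ‖FP z‖ₑ ≤ ENNReal.ofReal (κ ^ n) * eLpNorm f 1 (volume.restrict B) := by
    intro z
    have e4 : ‖(κ : ℂ) ^ n‖ₑ = ENNReal.ofReal (κ ^ n) := by
      rw [← ofReal_norm]; simp [abs_of_pos hκ]
    simp only [hFP]
    rw [enorm_mul, e4, ← eLpNorm_indicator_eq_eLpNorm_restrict hB, eLpNorm_one_eq_lintegral_enorm]
    gcongr
    rw [Real.fourier_eq]
    refine (enorm_integral_le_lintegral_enorm _).trans ?_
    apply lintegral_mono
    intro v
    simp only
    rw [← ofReal_norm, ← ofReal_norm, Circle.norm_smul]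
  have b3 : eLpNorm f 1 (volume.restrict B)
      ≤ eLpNorm f 2 (volume.restrict B) * volume B ^ ((1:ℝ)/2) := by
    have := eLpNorm_le_eLpNorm_mul_rpow_measure_univ (p := 1) (q := 2) (μ := volume.restrict B)
      (f := f) (by norm_num) h1.aestronglyMeasurable.restrict
    refine this.trans_eq ?_
    congr 2
    · simp
    · norm_num
  have b4 : eLpNorm FP 2 (volume.restrict B) ≤
      ENNReal.ofReal (κ ^ n) * volume B * eLpNorm f 2 (volume.restrict B) := by
    calc _ ≤ eLpNorm (fun _ : V => ENNReal.ofReal (κ ^ n) * eLpNorm f 1 (volume.restrict B)) 2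
              (volume.restrict B) := eLpNorm_mono_enorm b2
      _ = ENNReal.ofReal (κ ^ n) * eLpNorm f 1 (volume.restrict B) * volume B ^ ((1:ℝ)/2) := by
          rw [eLpNorm_const' _ (by norm_num) (by norm_num)]
          simp
      _ ≤ ENNReal.ofReal (κ ^ n) * (eLpNorm f 2 (volume.restrict B) * volume B ^ ((1:ℝ)/2))
            * volume B ^ ((1:ℝ)/2) := by gcongr
      _ = _ := by
          have : volume B = volume B ^ ((1:ℝ)/2) * volume B ^ ((1:ℝ)/2) := by
            rw [← ENNReal.rpow_add_of_nonneg _ _ (by norm_num) (by norm_num)]; norm_num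
          conv_rhs => rw [this]
          ring
  calc eLpNorm f 2 (volume.restrict B) = eLpNorm (FP + FQ) 2 (volume.restrict B) := by rw [← hf']
    _ ≤ _ := eLpNorm_add_le (by fun_prop) (by fun_prop) (by norm_num)
    _ ≤ _ := add_le_add b4 b1

end abstractPart

set_option linter.unusedSectionVars false

section schwartzPart
variable {E : Type*} [NormedAddCommGroup E] [InnerProductSpace ℝ E] [FiniteDimensional ℝ E]
  [MeasurableSpace E] [BorelSpace E]

lemma aux_schwartz_bound (φ : SchwartzMap E ℂ) (k : ℕ) :
    ∃ M : ℝ, 0 ≤ M ∧ ∀ x, (1 + ‖x‖) ^ k * ‖φ x‖ ≤ M := by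
  have h := fun x => SchwartzMap.one_add_le_sup_seminorm_apply (𝕜 := ℝ) (m := (k, 0))
    (le_refl k) (le_refl 0) φ x
  simp only [norm_iteratedFDeriv_zero] at h
  exact ⟨_, le_trans (by positivity) (h 0), h⟩

lemma aux_weight_integrable (φ : SchwartzMap E ℂ) (k : ℕ) :
    Integrable (fun x => (1 + ‖x‖) ^ k * ‖φ x‖) := by
  obtain ⟨M, hM0, hM⟩ := aux_schwartz_bound φ (k + (Module.finrank ℝ E + 1))
  have hi := (integrable_one_add_norm (E := E) (μ := volume)
    (r := ((Module.finrank ℝ E + 1 : ℕ) : ℝ)) (by push_cast; linarith)).const_mul M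
  refine hi.mono' (by fun_prop) (Filter.Eventually.of_forall fun x => ?_)
  have h1 : 0 < 1 + ‖x‖ := by positivity
  rw [Real.norm_of_nonneg (by positivity), Real.rpow_neg h1.le, Real.rpow_natCast,
    ← div_eq_mul_inv, le_div_iff₀ (by positivity)]
  calc _ = (1 + ‖x‖) ^ (k + (Module.finrank ℝ E + 1)) * ‖φ x‖ := by rw [pow_add]; ring
    _ ≤ M := hM x

lemma aux_autocorr (φ : SchwartzMap E ℂ) (k : ℕ) :
    ∃ C : ℝ, 0 ≤ C ∧ ∀ q, (1 + ‖q‖) ^ k * ∫ ξ, ‖φ ξ‖ * ‖φ (ξ + q)‖ ≤ C := by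
  obtain ⟨M, hM0, hM⟩ := aux_schwartz_bound φ k
  refine ⟨∫ ξ, ((1 + ‖ξ‖) ^ k * ‖φ ξ‖) * M, integral_nonneg fun ξ => by positivity, fun q => ?_⟩
  rw [← integral_const_mul]
  apply integral_mono_of_nonneg
  · exact Filter.Eventually.of_forall fun ξ => by positivity
  · exact (aux_weight_integrable φ k).mul_const M
  · refine Filter.Eventually.of_forall fun ξ => ?_
    have h1 : 1 + ‖q‖ ≤ (1 + ‖ξ‖) * (1 + ‖ξ + q‖) := by
      have : ‖q‖ ≤ ‖ξ + q‖ + ‖ξ‖ := by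
        simpa using norm_sub_le (ξ + q) ξ
      nlinarith [norm_nonneg ξ, norm_nonneg (ξ + q)]
    calc (1 + ‖q‖) ^ k * (‖φ ξ‖ * ‖φ (ξ + q)‖)
        ≤ ((1 + ‖ξ‖) * (1 + ‖ξ + q‖)) ^ k * (‖φ ξ‖ * ‖φ (ξ + q)‖) := by gcongr
      _ = ((1 + ‖ξ‖) ^ k * ‖φ ξ‖) * ((1 + ‖ξ + q‖) ^ k * ‖φ (ξ + q)‖) := by rw [mul_pow]; ring
      _ ≤ _ := mul_le_mul_of_nonneg_left (hM _) (by positivity)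

/-- the kernel `ψ(x+v) conj ψ(x-v)` -/
noncomputable def auxK (ψ : SchwartzMap E ℂ) (x v : E) : ℂ :=
  ψ (x + v) * (starRingEnd ℂ) (ψ (x - v))

lemma auxK_continuous (ψ : SchwartzMap E ℂ) : Continuous (fun z : E × E => auxK ψ z.1 z.2) := by
  unfold auxK
  have := ψ.continuous
  fun_prop

lemma auxK_symm (ψ : SchwartzMap E ℂ) (hψ : ∀ x, ψ (-x) = ψ x) (x v : E) :
    auxK ψ x v = auxK ψ v x := by
  unfold auxK
  rw [add_comm, ← hψ (x - v), neg_sub]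

lemma auxK_integrable (ψ : SchwartzMap E ℂ) (x : E) : Integrable (auxK ψ x) := by
  obtain ⟨M, hM0, hM⟩ := aux_schwartz_bound ψ 0
  have h : Integrable (fun v => ψ (x + v)) := ψ.integrable.comp_add_left x
  have hc := ψ.continuous
  refine (h.norm.mul_const M).mono' ?_ (Filter.Eventually.of_forall fun v => ?_)
  · exact ((auxK_continuous ψ).comp (by fun_prop : Continuous fun v : E => (x, v))).aestronglyMeasurable
  · unfold auxK
    rw [norm_mul, RCLike.norm_conj]
    gcongr
    simpa using hM (x - v)

lemma auxK_decay_x (ψ : SchwartzMap E ℂ) (hψ : ∀ x, ψ (-x) = ψ x) (k : ℕ) :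
    ∃ C : ℝ, 0 ≤ C ∧ ∀ x q, (1 + ‖x‖) ^ k * ‖𝓕 (auxK ψ x) q‖ ≤ C := by
  obtain ⟨C, hC0, hC⟩ := aux_autocorr ψ k
  refine ⟨C, hC0, fun x q => ?_⟩
  have h1 : ‖𝓕 (auxK ψ x) q‖ ≤ ∫ v, ‖auxK ψ x v‖ := by
    rw [Real.fourier_eq]
    refine (norm_integral_le_integral_norm _).trans_eq ?_
    simp [Circle.norm_smul]
  have h2 : ∫ v, ‖auxK ψ x v‖ = ∫ ξ, ‖ψ ξ‖ * ‖ψ (ξ + (2:ℝ) • x)‖ := by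
    rw [← integral_add_right_eq_self (μ := volume) (fun v => ‖auxK ψ x v‖) x]
    congr 1
    ext v
    unfold auxK
    rw [norm_mul, RCLike.norm_conj, mul_comm]
    congr 2
    · rw [← hψ]; congr 1; abel
    · congr 1; rw [two_smul]; abel
  calc (1 + ‖x‖) ^ k * ‖𝓕 (auxK ψ x) q‖
      ≤ (1 + ‖(2:ℝ) • x‖) ^ k * ∫ ξ, ‖ψ ξ‖ * ‖ψ (ξ + (2:ℝ) • x)‖ := by
        rw [← h2]
        gcongr
        rw [norm_smul]; norm_num; linarith [norm_nonneg x]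
    _ ≤ C := hC _

lemma auxK_decay_q (ψ : SchwartzMap E ℂ) (hψ : ∀ x, ψ (-x) = ψ x) (k : ℕ) :
    ∃ C : ℝ, 0 ≤ C ∧ ∀ x q, (1 + ‖q‖) ^ k * ‖𝓕 (auxK ψ x) q‖ ≤ C := by
  set φ : SchwartzMap E ℂ := 𝓕⁻ ψ with hφ
  have hφψ : 𝓕 (φ : E → ℂ) = ψ := by
    rw [← SchwartzMap.fourier_coe, hφ, FourierTransform.fourier_fourierInv_eq]
  obtain ⟨C, hC0, hC⟩ := aux_autocorr φ k
  refine ⟨C, hC0, fun x q => ?_⟩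
  set g : E → ℂ := fun u => 𝐞 (-⟪u - x, q⟫) • (starRingEnd ℂ) (ψ (u - (2:ℝ) • x)) with hg
  have hgi : Integrable g := by
    have h0 : Integrable (fun u => ψ (u - (2:ℝ) • x)) := ψ.integrable.comp_sub_right _
    have hc := ψ.continuous
    refine h0.norm.mono' ?_ (Filter.Eventually.of_forall fun u => ?_)
    · apply Continuous.aestronglyMeasurable
      have := Real.continuous_fourierChar
      simp only [hg, Circle.smul_def]
      fun_prop
    · simp [hg, Circle.norm_smul]
  have e1 : 𝓕 (auxK ψ x) q = ∫ u, ψ u * g u := by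
    rw [Real.fourier_eq, ← integral_sub_right_eq_self (μ := volume) _ x]
    congr 1
    ext u
    simp only [auxK, hg, Circle.smul_def, smul_eq_mul]
    have a1 : x + (u - x) = u := by abel
    have a2 : ψ (x - (u - x)) = ψ (u - (2:ℝ) • x) := by
      rw [← hψ]; congr 1; rw [two_smul]; abel
    rw [a1, a2]; ring
  have e2 : ∫ u, ψ u * g u = ∫ ξ, φ ξ * 𝓕 g ξ := by
    rw [← aux_swap φ.integrable hgi, hφψ]
  have e3 : ∀ ξ, ‖𝓕 g ξ‖ = ‖φ (ξ + q)‖ := by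
    intro ξ
    have : 𝓕 g ξ = (𝐞 (-⟪(2:ℝ) • x, ξ⟫ - ⟪x, q⟫) : ℂ) * (starRingEnd ℂ) (φ (ξ + q)) := by
      rw [hφ, SchwartzMap.fourierInv_coe, Real.fourierInv_eq, Real.fourier_eq, ← integral_conj,
        ← integral_const_mul,
        ← integral_add_right_eq_self (μ := volume) _ ((2:ℝ) • x)]
      congr 1
      ext w
      simp only [hg, Circle.smul_def, smul_eq_mul, map_mul, add_sub_cancel_right]
      rw [← mul_assoc, ← mul_assoc, ← Circle.coe_inv_eq_conj, ← AddChar.map_neg_eq_inv,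
        ← Circle.coe_mul, ← Circle.coe_mul, ← AddChar.map_add_eq_mul, ← AddChar.map_add_eq_mul]
      congr 3
      simp only [inner_add_left, inner_add_right, inner_sub_left, two_smul]
      ring
    rw [this, norm_mul, RCLike.norm_conj, Circle.norm_coe, one_mul]
  have e4 : ‖𝓕 (auxK ψ x) q‖ ≤ ∫ ξ, ‖φ ξ‖ * ‖φ (ξ + q)‖ := by
    rw [e1, e2]
    refine (norm_integral_le_integral_norm _).trans_eq ?_
    simp only [norm_mul, e3]
  calc _ ≤ (1 + ‖q‖) ^ k * ∫ ξ, ‖φ ξ‖ * ‖φ (ξ + q)‖ := by gcongr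
    _ ≤ C := hC q

lemma auxK_decay (ψ : SchwartzMap E ℂ) (hψ : ∀ x, ψ (-x) = ψ x) (k : ℕ) :
    ∃ C : ℝ, 0 ≤ C ∧ ∀ x q, ‖𝓕 (auxK ψ x) q‖ ≤ C * (((1 + ‖x‖) ^ k)⁻¹ * ((1 + ‖q‖) ^ k)⁻¹) := by
  obtain ⟨C, hC0, hC⟩ := auxK_decay_x ψ hψ (2 * k)
  obtain ⟨D, hD0, hD⟩ := auxK_decay_q ψ hψ (2 * k)
  refine ⟨max C D, le_max_of_le_left hC0, fun x q => ?_⟩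
  set t := ‖𝓕 (auxK ψ x) q‖
  have ht : 0 ≤ t := norm_nonneg _
  set a := (1 + ‖x‖) ^ k with ha
  set b := (1 + ‖q‖) ^ k with hb
  have ha0 : 0 < a := by positivity
  have hb0 : 0 < b := by positivity
  have h1 : a ^ 2 * t ≤ max C D := by
    rw [ha, ← pow_mul, mul_comm k 2]; exact (hC x q).trans (le_max_left _ _)
  have h2 : b ^ 2 * t ≤ max C D := by
    rw [hb, ← pow_mul, mul_comm k 2]; exact (hD x q).trans (le_max_right _ _)
  rw [← mul_inv, ← div_eq_mul_inv, le_div_iff₀ (by positivity)]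
  nlinarith [mul_nonneg ht (sq_nonneg (a - b))]

lemma auxK_measurable (ψ : SchwartzMap E ℂ) :
    StronglyMeasurable (fun z : E × E => 𝓕 (auxK ψ z.1) z.2) := by
  simp only [Real.fourier_eq]
  apply StronglyMeasurable.integral_prod_right (f := fun (z : E × E) (v : E) =>
    𝐞 (-⟪v, z.2⟫) • auxK ψ z.1 v)
  apply Continuous.stronglyMeasurable
  have := Real.continuous_fourierChar
  have h2 : Continuous (fun p : (E × E) × E => auxK ψ p.1.1 p.2) :=
    (auxK_continuous ψ).comp (by fun_prop : Continuous fun p : (E × E) × E => (p.1.1, p.2))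
  simp only [Function.uncurry_def, Circle.smul_def]
  fun_prop

end schwartzPart

section concrete

lemma aux_wigner_eq (n : ℕ) (hb : ℝ) (hhb : 0 < hb) (ψ : SchwartzMap (EuclideanSpace ℝ (Fin n)) ℂ)
    (z : EuclideanSpace ℝ (Fin n) × EuclideanSpace ℝ (Fin n)) :
    wignerFn n hb ψ z = (((Real.pi * hb)⁻¹ : ℝ) : ℂ) ^ n *
      𝓕 (auxK ψ z.1) ((Real.pi * hb)⁻¹ • z.2) := by
  have hpi := Real.pi_pos
  unfold wignerFn
  set F : EuclideanSpace ℝ (Fin n) → ℂ := fun y =>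
      Complex.exp (-(Complex.I / hb) * (⟪z.2, y⟫ : ℝ)) *
        ψ (z.1 + (1 / 2 : ℝ) • y) * (starRingEnd ℂ) (ψ (z.1 - (1 / 2 : ℝ) • y)) with hF
  have h1 := Measure.integral_comp_smul (volume : Measure (EuclideanSpace ℝ (Fin n))) F 2
  have h2 : 𝓕 (auxK ψ z.1) ((Real.pi * hb)⁻¹ • z.2) = ∫ v, F ((2:ℝ) • v) := by
    rw [Real.fourier_eq']
    congr 1
    ext v
    simp only [hF, auxK, smul_smul, smul_eq_mul]
    norm_num
    rw [← mul_assoc]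
    congr 3
    rw [inner_smul_right, inner_smul_right, real_inner_comm]
    push_cast
    field_simp
  rw [h2, h1]
  rw [finrank_euclideanSpace_fin, abs_of_pos (by positivity), Complex.real_smul, ← mul_assoc]
  congr 1
  rw [Real.rpow_neg (by positivity), Real.rpow_natCast]
  push_cast
  rw [mul_assoc, mul_pow, inv_pow, mul_inv]
  ring

lemma aux_wigner_bound (n : ℕ) (hb : ℝ) (hhb : 0 < hb)
    (ψ : SchwartzMap (EuclideanSpace ℝ (Fin n)) ℂ) (hψ : ∀ x, ψ (-x) = ψ x) :
    ∃ C : ℝ, 0 ≤ C ∧ ∀ x q, ‖𝓕 (auxK ψ x) ((Real.pi * hb)⁻¹ • q)‖ ≤ C * (((1 + ‖x‖) ^ (n+1))⁻¹ *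
      ((1 + ‖(Real.pi * hb)⁻¹ • q‖) ^ (n+1))⁻¹) := by
  obtain ⟨C, hC0, hC⟩ := auxK_decay ψ hψ (n+1)
  exact ⟨C, hC0, fun x q => hC x _⟩

lemma aux_int_weight (n : ℕ) :
    Integrable (fun x : EuclideanSpace ℝ (Fin n) => ((1 + ‖x‖) ^ (n+1))⁻¹) := by
  have hi := (integrable_one_add_norm (E := EuclideanSpace ℝ (Fin n)) (μ := volume)
    (r := ((n + 1 : ℕ) : ℝ)) (by simp))
  refine hi.congr (Filter.Eventually.of_forall fun x => ?_)
  simp only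
  rw [Real.rpow_neg (by positivity), Real.rpow_natCast]

lemma aux_wigner_measurable (n : ℕ) (hb : ℝ) (hhb : 0 < hb)
    (ψ : SchwartzMap (EuclideanSpace ℝ (Fin n)) ℂ) :
    StronglyMeasurable (wignerFn n hb ψ) := by
  have h : wignerFn n hb ψ = fun z => (((Real.pi * hb)⁻¹ : ℝ) : ℂ) ^ n *
      𝓕 (auxK ψ z.1) ((Real.pi * hb)⁻¹ • z.2) := by
    ext z; exact aux_wigner_eq n hb hhb ψ z
  rw [h]
  refine StronglyMeasurable.const_mul ?_ _
  exact (auxK_measurable ψ).comp_measurable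
    (g := fun z : EuclideanSpace ℝ (Fin n) × EuclideanSpace ℝ (Fin n) =>
      (z.1, (Real.pi * hb)⁻¹ • z.2)) (by fun_prop)

lemma aux_wigner_dom (n : ℕ) (hb : ℝ) (hhb : 0 < hb)
    (ψ : SchwartzMap (EuclideanSpace ℝ (Fin n)) ℂ) (hψ : ∀ x, ψ (-x) = ψ x) :
    ∃ C : ℝ, 0 ≤ C ∧ ∀ z : EuclideanSpace ℝ (Fin n) × EuclideanSpace ℝ (Fin n),
      ‖wignerFn n hb ψ z‖ ≤ C * (((1 + ‖z.1‖) ^ (n+1))⁻¹ *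
      ((1 + ‖(Real.pi * hb)⁻¹ • z.2‖) ^ (n+1))⁻¹) := by
  obtain ⟨C, hC0, hC⟩ := aux_wigner_bound n hb hhb ψ hψ
  refine ⟨‖(((Real.pi * hb)⁻¹ : ℝ) : ℂ) ^ n‖ * C, by positivity, fun z => ?_⟩
  rw [aux_wigner_eq n hb hhb, norm_mul, mul_assoc]
  gcongr
  exact hC _ _

lemma aux_wigner_integrable (n : ℕ) (hb : ℝ) (hhb : 0 < hb)
    (ψ : SchwartzMap (EuclideanSpace ℝ (Fin n)) ℂ) (hψ : ∀ x, ψ (-x) = ψ x) :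
    Integrable (wignerFn n hb ψ) := by
  obtain ⟨C, hC0, hC⟩ := aux_wigner_dom n hb hhb ψ hψ
  have hκ : (Real.pi * hb)⁻¹ ≠ 0 := by have := Real.pi_pos; positivity
  have h1 := (aux_int_weight n).mul_prod ((aux_int_weight n).comp_smul hκ)
  exact (h1.const_mul C).mono' (aux_wigner_measurable n hb hhb ψ).aestronglyMeasurable
    (Filter.Eventually.of_forall hC)

lemma aux_wigner_memLp (n : ℕ) (hb : ℝ) (hhb : 0 < hb)
    (ψ : SchwartzMap (EuclideanSpace ℝ (Fin n)) ℂ) (hψ : ∀ x, ψ (-x) = ψ x) :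
    MemLp (wignerFn n hb ψ) 2 := by
  obtain ⟨C, hC0, hC⟩ := aux_wigner_dom n hb hhb ψ hψ
  have hm := (aux_wigner_measurable n hb hhb ψ).aestronglyMeasurable (μ := volume)
  rw [memLp_two_iff_integrable_sq_norm hm]
  have hle : ∀ z, ‖wignerFn n hb ψ z‖ ≤ C := by
    intro z
    refine (hC z).trans (mul_le_of_le_one_right hC0 ?_)
    apply mul_le_one₀ <;> first | positivity | skip
    · apply inv_le_one_of_one_le₀
      apply one_le_pow₀; linarith [norm_nonneg z.1]
    · apply inv_le_one_of_one_le₀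
      apply one_le_pow₀; linarith [norm_nonneg ((Real.pi * hb)⁻¹ • z.2)]
  refine ((aux_wigner_integrable n hb hhb ψ hψ).norm.const_mul C).mono' (hm.norm.pow 2)
    (Filter.Eventually.of_forall fun z => ?_)
  rw [Real.norm_of_nonneg (by positivity), sq]
  gcongr
  exact hle z

/-- The rotation `(x,p) ↦ (p,-x)`. -/
noncomputable def auxJ (n : ℕ) :
    WithLp 2 (EuclideanSpace ℝ (Fin n) × EuclideanSpace ℝ (Fin n)) ≃ₗᵢ[ℝ]
    WithLp 2 (EuclideanSpace ℝ (Fin n) × EuclideanSpace ℝ (Fin n)) where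
  toFun z := WithLp.toLp 2 (z.snd, -z.fst)
  invFun z := WithLp.toLp 2 (-z.snd, z.fst)
  left_inv z := by simp; rfl
  right_inv z := by simp; rfl
  map_add' a b := by
    apply WithLp.ofLp_injective; ext <;> simp [add_comm]
  map_smul' a b := by
    apply WithLp.ofLp_injective; ext <;> simp
  norm_map' z := by
    simp [WithLp.prod_norm_eq_of_L2, add_comm]

lemma aux_inner (n : ℕ) (κ : ℝ) (w : EuclideanSpace ℝ (Fin n) × EuclideanSpace ℝ (Fin n))
    (z : WithLp 2 (EuclideanSpace ℝ (Fin n) × EuclideanSpace ℝ (Fin n))) :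
    ⟪WithLp.toLp 2 w, κ • auxJ n z⟫ = ⟪w.1, κ • z.snd⟫ - ⟪κ • w.2, z.fst⟫ := by
  have : auxJ n z = WithLp.toLp 2 (z.snd, -z.fst) := rfl
  rw [this, inner_smul_right, WithLp.prod_inner_apply]
  simp [inner_smul_left, inner_smul_right]
  ring

lemma aux_selfdual (n : ℕ) (hb : ℝ) (hhb : 0 < hb)
    (ψ : SchwartzMap (EuclideanSpace ℝ (Fin n)) ℂ) (hψ : ∀ x, ψ (-x) = ψ x)
    (z : WithLp 2 (EuclideanSpace ℝ (Fin n) × EuclideanSpace ℝ (Fin n))) :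
    wignerFn n hb ψ (WithLp.ofLp z) = (((Real.pi * hb)⁻¹ : ℝ) : ℂ) ^ n *
      𝓕 (fun z : WithLp 2 (EuclideanSpace ℝ (Fin n) × EuclideanSpace ℝ (Fin n)) =>
        wignerFn n hb ψ (WithLp.ofLp z)) ((Real.pi * hb)⁻¹ • auxJ n z) := by
  have hpi := Real.pi_pos
  have hW := aux_wigner_integrable n hb hhb ψ hψ
  obtain ⟨C, hC0, hC⟩ := auxK_decay ψ hψ (n+1)
  have hWeq := aux_wigner_eq n hb hhb ψ
  set κ := (Real.pi * hb)⁻¹ with hκ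
  have hκ0 : 0 < κ := by positivity
  rw [Real.fourier_eq]
  have hmp := WithLp.volume_preserving_toLp (EuclideanSpace ℝ (Fin n)) (EuclideanSpace ℝ (Fin n))
  rw [← hmp.integral_comp (MeasurableEquiv.toLp 2
    (EuclideanSpace ℝ (Fin n) × EuclideanSpace ℝ (Fin n))).measurableEmbedding]
  simp only [aux_inner]
  rw [Measure.volume_eq_prod, integral_prod]
  swap
  · have hc := Real.continuous_fourierChar
    refine hW.norm.mono' ?_ (Filter.Eventually.of_forall fun w => ?_)
    · simp only [Circle.smul_def, smul_eq_mul]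
      refine AEStronglyMeasurable.mul ?_ hW.aestronglyMeasurable
      apply Continuous.aestronglyMeasurable
      fun_prop
    · rw [Circle.norm_smul]
  have inner : ∀ x : EuclideanSpace ℝ (Fin n),
      ∫ p : EuclideanSpace ℝ (Fin n), 𝐞 (-(⟪x, κ • z.snd⟫ - ⟪κ • p, z.fst⟫)) • wignerFn n hb ψ (x, p)
       = 𝐞 (-⟪x, κ • z.snd⟫) • auxK ψ z.fst x := by
    intro x
    have hFi : Integrable (𝓕 (auxK ψ x)) := by
      refine ((aux_int_weight n).const_mul (C * ((1 + ‖x‖) ^ (n+1))⁻¹)).mono'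
        (aux_fourier_continuous (auxK_integrable ψ x)).aestronglyMeasurable
        (Filter.Eventually.of_forall fun q => ?_)
      rw [mul_assoc]; exact hC x q
    have hcK : Continuous (auxK ψ x) :=
      (auxK_continuous ψ).comp (by fun_prop : Continuous fun v => (x, v))
    have hinv := congrFun (hcK.fourierInv_fourier_eq (auxK_integrable ψ x) hFi) z.fst
    rw [Real.fourierInv_eq] at hinv
    have hs := Measure.integral_comp_smul (volume : Measure (EuclideanSpace ℝ (Fin n)))
      (fun v => 𝐞 ⟪v, z.fst⟫ • 𝓕 (auxK ψ x) v) κ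
    rw [hinv, finrank_euclideanSpace_fin, abs_of_pos (by positivity), Complex.real_smul] at hs
    rw [auxK_symm ψ hψ z.fst x]
    have : auxK ψ x z.fst = (κ : ℂ) ^ n *
        ∫ p, 𝐞 ⟪κ • p, z.fst⟫ • 𝓕 (auxK ψ x) (κ • p) := by
      rw [hs, ← mul_assoc]
      push_cast
      rw [mul_inv_cancel₀, one_mul]
      exact pow_ne_zero _ (by exact_mod_cast hκ0.ne')
    rw [this, Circle.smul_def, smul_eq_mul, ← mul_assoc, ← integral_const_mul]
    congr 1
    ext p
    rw [hWeq, neg_sub, sub_eq_add_neg, AddChar.map_add_eq_mul]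
    simp only [Circle.smul_def, smul_eq_mul, Circle.coe_mul]
    ring
  simp only [inner]
  rw [hWeq, Real.fourier_eq]
  rfl

end concrete

lemma aux_eLpNorm {α : Type*} [MeasurableSpace α] {μ : Measure α} {f : α → ℂ} (hf : MemLp f 2 μ) :
    eLpNorm f 2 μ = ENNReal.ofReal (√(∫ x, ‖f x‖ ^ 2 ∂μ)) := by
  rw [hf.eLpNorm_eq_integral_rpow_norm (by norm_num) (by norm_num), Real.sqrt_eq_rpow]
  norm_num

lemma aux_volume (n : ℕ) (hn : 1 ≤ n) (hb : ℝ) (hhb : 0 < hb) :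
    volume (WithLp.ofLp ⁻¹' phaseBall n hb :
      Set (WithLp 2 (EuclideanSpace ℝ (Fin n) × EuclideanSpace ℝ (Fin n))))
      = ENNReal.ofReal ((Real.pi * hb) ^ n / n.factorial) := by
  have hset : (WithLp.ofLp ⁻¹' phaseBall n hb :
      Set (WithLp 2 (EuclideanSpace ℝ (Fin n) × EuclideanSpace ℝ (Fin n))))
      = Metric.closedBall 0 (√hb) := by
    ext z
    simp only [Set.mem_preimage, phaseBall, Set.mem_ofPred_eq, mem_closedBall_zero_iff]
    rw [WithLp.prod_norm_eq_of_L2, Real.sqrt_le_sqrt_iff hhb.le]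
    rfl
  have : Nonempty (Fin n) := ⟨⟨0, hn⟩⟩
  have : Nontrivial (EuclideanSpace ℝ (Fin n)) := inferInstance
  have : Nontrivial (WithLp 2 (EuclideanSpace ℝ (Fin n) × EuclideanSpace ℝ (Fin n))) :=
    inferInstance
  have hfr : Module.finrank ℝ (WithLp 2 (EuclideanSpace ℝ (Fin n) × EuclideanSpace ℝ (Fin n)))
      = 2 * n := by
    rw [(WithLp.linearEquiv 2 ℝ _).finrank_eq, Module.finrank_prod, finrank_euclideanSpace_fin]
    ring
  rw [hset, InnerProductSpace.volume_closedBall_of_dim_even hfr, hfr,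
    ← ENNReal.ofReal_pow (by positivity), ← ENNReal.ofReal_mul (by positivity), pow_mul,
    Real.sq_sqrt hhb.le]
  congr 1
  rw [mul_pow]; ring

theorem wigner_concentration_ball (n : ℕ) (hb : ℝ) (hhb : 0 < hb)
    (ψ : SchwartzMap (EuclideanSpace ℝ (Fin n)) ℂ) (hψeven : ∀ x, ψ (-x) = ψ x)
    (hW0 : wignerFn n hb ψ ≠ 0)
    (ε : ℝ) (hε0 : 0 ≤ ε) (hε1 : ε ≤ 1)
    (hconc : (1 - ε ^ 2) *
        ∫ z : EuclideanSpace ℝ (Fin n) × EuclideanSpace ℝ (Fin n), ‖wignerFn n hb ψ z‖ ^ 2 ≤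
        ∫ z in phaseBall n hb, ‖wignerFn n hb ψ z‖ ^ 2) :
    1 / 2 - 1 / (2 * (n.factorial : ℝ)) ≤ ε := by
  rcases Nat.eq_zero_or_pos n with rfl | hn
  · simpa using hε0
  have hpi := Real.pi_pos
  have hself := aux_selfdual n hb hhb ψ hψeven
  have hWi := aux_wigner_integrable n hb hhb ψ hψeven
  have hW2 := aux_wigner_memLp n hb hhb ψ hψeven
  have hmp := WithLp.volume_preserving_ofLp (EuclideanSpace ℝ (Fin n)) (EuclideanSpace ℝ (Fin n))
  have hme := (MeasurableEquiv.toLp 2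
    (EuclideanSpace ℝ (Fin n) × EuclideanSpace ℝ (Fin n))).symm.measurableEmbedding
  have hBm : MeasurableSet (phaseBall n hb) := by
    unfold phaseBall
    exact measurableSet_le (by fun_prop) (by fun_prop)
  have hfr : Module.finrank ℝ (WithLp 2 (EuclideanSpace ℝ (Fin n) × EuclideanSpace ℝ (Fin n)))
      = 2 * n := by
    rw [(WithLp.linearEquiv 2 ℝ _).finrank_eq, Module.finrank_prod, finrank_euclideanSpace_fin]
    ring
  set κ := (Real.pi * hb)⁻¹ with hκ
  have hκ0 : 0 < κ := by positivity
  set f : WithLp 2 (EuclideanSpace ℝ (Fin n) × EuclideanSpace ℝ (Fin n)) → ℂ :=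
    fun z => wignerFn n hb ψ (WithLp.ofLp z) with hf
  set B : Set (WithLp 2 (EuclideanSpace ℝ (Fin n) × EuclideanSpace ℝ (Fin n))) :=
    WithLp.ofLp ⁻¹' phaseBall n hb with hB
  have hBm' : MeasurableSet B := hmp.measurable hBm
  have f1 : Integrable f := hmp.integrable_comp_of_integrable hWi
  have f2 : MemLp f 2 := hW2.comp_measurePreserving hmp
  have hD := aux_donoho n hfr κ hκ0 (auxJ n) f1 f2 hself hBm'
  rw [aux_volume n hn hb hhb, aux_eLpNorm (f2.restrict B), aux_eLpNorm (f2.restrict Bᶜ),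
    ← ENNReal.ofReal_mul (by positivity), ← ENNReal.ofReal_mul (by positivity),
    ← ENNReal.ofReal_add (by positivity) (by positivity),
    ENNReal.ofReal_le_ofReal_iff (by positivity)] at hD
  have hcst : κ ^ n * ((Real.pi * hb) ^ n / n.factorial) = 1 / n.factorial := by
    rw [hκ, inv_pow]
    field_simp
  rw [hcst] at hD
  have i1 : ∫ z, ‖wignerFn n hb ψ z‖ ^ 2 = ∫ z, ‖f z‖ ^ 2 :=
    (hmp.integral_comp hme (fun z => ‖wignerFn n hb ψ z‖ ^ 2)).symm
  have i2 : ∫ z in phaseBall n hb, ‖wignerFn n hb ψ z‖ ^ 2 = ∫ z in B, ‖f z‖ ^ 2 :=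
    (hmp.setIntegral_preimage_emb hme (fun z => ‖wignerFn n hb ψ z‖ ^ 2) _).symm
  have hsq : Integrable (fun z => ‖f z‖ ^ 2) :=
    (memLp_two_iff_integrable_sq_norm f1.aestronglyMeasurable).1 f2
  have hsum := integral_add_compl hBm' hsq
  rw [i1, i2, ← hsum] at hconc
  have hpos : 0 < ∫ z, ‖f z‖ ^ 2 := by
    have hnn : 0 ≤ ∫ z, ‖f z‖ ^ 2 := integral_nonneg (fun z => sq_nonneg ‖f z‖)
    rcases hnn.lt_or_eq with h | h
    · exact h
    · exfalso
      have h0 : f =ᵐ[volume] 0 := by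
        have := (integral_eq_zero_iff_of_nonneg (fun z => sq_nonneg ‖f z‖) hsq).1 h.symm
        filter_upwards [this] with z hz
        simpa using hz
      apply hW0
      ext w
      have hw := hself (WithLp.toLp 2 w)
      rw [Real.fourier_eq, integral_eq_zero_of_ae, mul_zero] at hw
      · exact hw
      · filter_upwards [h0] with z hz
        rw [hz]; simp
  rw [← hsum] at hpos
  have ha : 0 ≤ ∫ z in B, ‖f z‖ ^ 2 := integral_nonneg (fun z => sq_nonneg ‖f z‖)
  have hb' : 0 ≤ ∫ z in Bᶜ, ‖f z‖ ^ 2 := integral_nonneg (fun z => sq_nonneg ‖f z‖)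
  have sa := Real.sq_sqrt ha
  have sb := Real.sq_sqrt hb'
  rw [← sa, ← sb] at hconc hpos
  set a := √(∫ z in B, ‖f z‖ ^ 2)
  set b := √(∫ z in Bᶜ, ‖f z‖ ^ 2)
  have a0 : 0 ≤ a := Real.sqrt_nonneg _
  have b0 : 0 ≤ b := Real.sqrt_nonneg _
  set N := √(a ^ 2 + b ^ 2) with hN
  have hN0 : 0 < N := Real.sqrt_pos.2 hpos
  have hNsq : N ^ 2 = a ^ 2 + b ^ 2 := Real.sq_sqrt hpos.le
  have hbN : b ≤ ε * N := by
    refine (sq_le_sq₀ b0 (by positivity)).1 ?_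
    rw [mul_pow, hNsq]; nlinarith
  have habN : N ≤ a + b := by
    apply abs_le_of_sq_le_sq' _ (by positivity) |>.2
    nlinarith
  have hc1 : 1 / (n.factorial : ℝ) ≤ 1 := by
    rw [div_le_one (by positivity)]
    exact_mod_cast Nat.factorial_pos n
  have hc0 : 0 < 1 / (n.factorial : ℝ) := by positivity
  have hrw : 1 / (2 * (n.factorial : ℝ)) = 1 / 2 * (1 / (n.factorial : ℝ)) := by
    field_simp
  rw [hrw]
  set c := 1 / (n.factorial : ℝ)
  have h3 : (1 - c) * (N - b) ≤ b := by
    nlinarith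
  have h4 : (1 - c) * N ≤ 2 * (ε * N) := by nlinarith
  have h5 : 1 - c ≤ 2 * ε := by
    by_contra hcon
    push Not at hcon
    nlinarith
  linarith
end
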